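/- Let G = A₁ ∗_C A₋₁ be a word hyperbolic group which is the amalgamated free product of two groups A₁ and A₋₁ along a virtually cyclic subgroup C. If both A₁ and A₋₁ have property (Q), then G has property (Q). -/

import Mathlib

universe u v w

section Defs

variable {G : Type u} [Group G]

/-- A finite generating set closed under inversion. -/
def IsSymmGen (X : Set G) : Prop :=
  X.Finite ∧ (∀ x ∈ X, x⁻¹ ∈ X) ∧ Subgroup.closure X = ⊤

/-- Word length of `g` with respect to `X`. -/
noncomputable def wordLength (X : Set G) (g : G) : ℕ :=
  sInf {n : ℕ | ∃ l : List G, l.length = n ∧ (∀ x ∈ l, x ∈ X) ∧ l.prod = g}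

/-- Word metric. -/
noncomputable def wordDist (X : Set G) (g h : G) : ℕ :=
  wordLength X (g⁻¹ * h)

/-- Gromov product with respect to the word metric. -/
noncomputable def gromovProd (X : Set G) (x y w : G) : ℝ :=
  ((wordDist X x w : ℝ) + (wordDist X y w : ℝ) - (wordDist X x y : ℝ)) / 2

end Defs

/-- A group is word hyperbolic if for some finite symmetric generating set the Gromov
product satisfies the hyperbolicity inequality. -/
def IsWordHyperbolic (G : Type u) [Group G] : Prop :=
  ∃ X : Set G, IsSymmGen X ∧ ∃ δ : ℝ, 0 ≤ δ ∧
    ∀ x y z w : G,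
      gromovProd X x z w ≥ min (gromovProd X x y w) (gromovProd X y z w) - δ

/-- A subgroup is quasiconvex: it is finitely generated and word lengths distort linearly. -/
def IsQuasiconvex {G : Type u} [Group G] (A : Subgroup G) : Prop :=
  ∃ Y : Set ↥A, IsSymmGen Y ∧ ∃ X : Set G, IsSymmGen X ∧ ∃ c : ℝ, 0 < c ∧
    ∀ a : ↥A, (wordLength Y a : ℝ) ≤ c * (wordLength X (a : G) : ℝ) + c

/-- Property (Q): every finitely generated subgroup is quasiconvex. -/
def HasPropertyQ (G : Type u) [Group G] : Prop :=
  ∀ H : Subgroup G, H.FG → IsQuasiconvex H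

/-- A group is virtually cyclic if it has a cyclic subgroup of finite index. -/
def IsVirtuallyCyclic (C : Type u) [Group C] : Prop :=
  ∃ Z : Subgroup C, IsCyclic ↥Z ∧ Z.FiniteIndex

/-- `G` is the amalgamated free product of its subgroups `A` and `B` along `C`:
`C = A ⊓ B`, `A ⊔ B = ⊤` and `G` has the pushout universal property. -/
structure IsAmalgamatedFreeProduct {G : Type u} [Group G] (A B C : Subgroup G) : Prop where
  le_left : C ≤ A
  le_right : C ≤ B
  inf_eq : A ⊓ B = C
  sup_eq_top : A ⊔ B = ⊤
  univ : ∀ (K : Type u) [Group K] (f : ↥A →* K) (g : ↥B →* K),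
    (∀ (c : G) (hA : c ∈ A) (hB : c ∈ B), f ⟨c, hA⟩ = g ⟨c, hB⟩) →
    ∃ h : G →* K, (∀ a : ↥A, h a = f a) ∧ (∀ b : ↥B, h b = g b)

section Words

variable {G : Type u} [Group G]

/-- A word over the alphabet `X`. -/
def IsWordOver (X : Set G) (l : List G) : Prop := ∀ x ∈ l, x ∈ X

/-- A geodesic word over `X`. -/
def IsGeodesicWord (X : Set G) (l : List G) : Prop :=
  IsWordOver X l ∧ l.length = wordLength X l.prod

/-- A `lam`-quasigeodesic word over `X`: every subword `v` satisfies
`l(v) ≤ lam * l_X(v̄) + lam`. -/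
def IsQuasigeodesicWord (X : Set G) (lam : ℝ) (l : List G) : Prop :=
  IsWordOver X l ∧
    ∀ v : List G, v <:+: l → (v.length : ℝ) ≤ lam * (wordLength X v.prod : ℝ) + lam

/-- `g` is a shortest element of the subset `S` with respect to `wordLength X`. -/
def ShortestIn (X : Set G) (g : G) (S : Set G) : Prop :=
  g ∈ S ∧ ∀ s ∈ S, wordLength X g ≤ wordLength X s

end Words

/-- `G` together with `ια, ιβ` is the pushout of `ℤ → A, 1 ↦ x` and `ℤ → B, 1 ↦ y`. -/
structure IsAmalgamOverZ {A : Type u} {B : Type v} {G : Type w}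
    [Group A] [Group B] [Group G]
    (ια : A →* G) (ιβ : B →* G) (x : A) (y : B) : Prop where
  comm : ια x = ιβ y
  gen : ια.range ⊔ ιβ.range = ⊤
  univ : ∀ (K : Type (max u v w)) [Group K] (f : A →* K) (g : B →* K),
    f x = g y → ∃ h : G →* K, h.comp ια = f ∧ h.comp ιβ = g

section Amalgam

open scoped Pointwise

/-- The combinatorics of the Bass–Serre tree of a splitting `A true ∗_C A false`, rooted at the
edge `C`. Edges are left cosets of `C`, vertices are left cosets of `A s`. The edge `gate s g C` is
the edge at the vertex `g A s` closest to the root, and `depth` measures distance from the root. -/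
structure BassSerre {G : Type u} [Group G] (A : Bool → Subgroup G) (C : Subgroup G) where
  depth : G → ℕ
  gate : Bool → G → G
  gate_mem : ∀ s g, g⁻¹ * gate s g ∈ A s
  gate_mul : ∀ s g, ∀ a ∈ A s, gate s (g * a) = gate s g
  gate_one : ∀ s, gate s 1 = 1
  depth_gate : ∀ s g, g⁻¹ * gate s g ∉ C → depth (gate s g) < depth g
  side_unique : ∀ s t g, g⁻¹ * gate s g ∉ C → g⁻¹ * gate t g ∉ C → s = t
  exists_side : ∀ g, g ∉ C → ∃ s, g⁻¹ * gate s g ∉ C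

namespace Monoid.PushoutI.NormalWord

open Monoid Monoid.CoprodI Subgroup

variable {ι : Type*} {G : ι → Type*} {H : Type*} [∀ i, Group (G i)] [Group H]
  {φ : ∀ i, H →* G i} {d : Transversal φ} [DecidableEq ι] [∀ i, DecidableEq (G i)]

/-- The normal word obtained by removing the maximal left factor in `G i`. -/
noncomputable def pairTail (i : ι) (w : NormalWord d) : NormalWord d :=
  ⟨(equivPair i w).tail, 1, (equivPair i w).normalized⟩

theorem pairTail_smul (i : ι) (g : G i) (w : NormalWord d) :
    pairTail i (of (φ := φ) i g • w) = pairTail i w := by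
  simp only [pairTail, summand_smul_def, Equiv.apply_symm_apply]

theorem rcons_toWord_of_mem (i : ι) (p : Pair d i) (h : p.head ∈ (φ i).range) :
    (rcons i p).toWord = p.tail := by
  have key := (IsComplement.coe_equiv_snd_eq_one_iff_mem (d.compl i) (d.one_mem _)).2 h
  exact dif_pos key

theorem rcons_of_notMem (i : ι) (p : Pair d i) (h : p.head ∉ (φ i).range) :
    (rcons i p).fstIdx = some i ∧ (rcons i p).toList.length = p.tail.toList.length + 1 := by
  have key := mt (IsComplement.coe_equiv_snd_eq_one_iff_mem (d.compl i) (d.one_mem _)).1 h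
  have hw : (rcons i p).toWord = Word.cons _ p.tail p.fstIdx_ne key := dif_neg key
  have hl := congrArg Word.toList hw
  exact ⟨by rw [hw, Word.fstIdx_cons], by rw [hl]; rfl⟩

theorem rcons_head_of_head_eq_one (i : ι) (p : Pair d i) (h : p.head = 1) :
    (rcons i p).head = 1 := by
  have key := (IsComplement.coe_equiv_fst_eq_one_iff_mem (d.compl i) (g := p.head)
    (one_mem _)).2 (by rw [h]; exact d.one_mem i)
  apply d.injective i
  rw [map_one, ← key]
  exact MonoidHom.apply_ofInjective_symm (d.injective i) _

theorem equivPair_pairTail (i : ι) (w : NormalWord d) :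
    equivPair i (pairTail i w) = { equivPair i w with head := 1 } := by
  rw [← Equiv.eq_symm_apply]
  change _ = rcons i _
  apply NormalWord.ext
  · exact (rcons_head_of_head_eq_one i _ rfl).symm
  · exact (congrArg Word.toList (rcons_toWord_of_mem i
      { equivPair i w with head := 1 } (one_mem (φ i).range))).symm

theorem smul_pairTail (i : ι) (w : NormalWord d) :
    of (φ := φ) i (equivPair i w).head • pairTail i w = w := by
  rw [summand_smul_def, equivPair_pairTail, Equiv.symm_apply_eq]
  simp

theorem length_pairTail_lt (i : ι) (w : NormalWord d) (h : (equivPair i w).head ∉ (φ i).range) :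
    (pairTail i w).toList.length < w.toList.length ∧ w.fstIdx = some i := by
  have h1 := rcons_of_notMem i _ h
  have h2 : rcons i (equivPair i w) = w := (equivPair i).symm_apply_apply w
  rw [h2] at h1
  exact ⟨by rw [h1.2]; exact Nat.lt_succ_self _, h1.1⟩

theorem head_notMem_of_fstIdx (i : ι) (w : NormalWord d) (h : w.fstIdx = some i) :
    (equivPair i w).head ∉ (φ i).range := by
  intro hm
  have h1 := rcons_toWord_of_mem i _ hm
  have h2 : rcons i (equivPair i w) = w := (equivPair i).symm_apply_apply w
  rw [h2] at h1
  exact (equivPair i w).fstIdx_ne (h1 ▸ h)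

theorem pairTail_empty (i : ι) : pairTail i (empty : NormalWord d) = empty := by
  have : equivPair i (empty : NormalWord d) = default := by
    rw [← Equiv.eq_symm_apply]
    change _ = rcons i _
    apply NormalWord.ext
    · exact (rcons_head_of_head_eq_one i _ rfl).symm
    · exact (congrArg Word.toList (rcons_toWord_of_mem i default (one_mem (φ i).range))).symm
  apply NormalWord.ext
  · rfl
  · change (equivPair i (empty : NormalWord d)).tail.toList = _
    rw [this]
    rfl

end Monoid.PushoutI.NormalWord

set_option maxHeartbeats 2000000 in
open Monoid PushoutI in
/-- An amalgamated free product has a Bass–Serre tree. -/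
theorem IsAmalgamatedFreeProduct.nonempty_bassSerre {G : Type u} [Group G] {A₁ A₂ C : Subgroup G}
    (amal : IsAmalgamatedFreeProduct A₁ A₂ C) :
    Nonempty (BassSerre (fun s => bif s then A₁ else A₂) C) := by
  classical
  set A : Bool → Subgroup G := fun s => bif s then A₁ else A₂ with hA
  have hCA : ∀ s, C ≤ A s := by
    rintro (_ | _)
    exacts [amal.le_right, amal.le_left]
  let φ : ∀ s : Bool, C →* A s := fun s => Subgroup.inclusion (hCA s)
  have hφ : ∀ s, Function.Injective (φ s) := fun s => Subgroup.inclusion_injective _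
  obtain ⟨d⟩ := NormalWord.transversal_nonempty φ hφ
  have hbase : ∀ s (c : G) (hc : c ∈ C), of (φ := φ) s ⟨c, hCA s hc⟩ = base φ ⟨c, hc⟩ :=
    fun s c hc => of_apply_eq_base φ s ⟨c, hc⟩
  obtain ⟨f, hf₁, hf₂⟩ := amal.univ (PushoutI φ) (of (φ := φ) true) (of (φ := φ) false) (by
    intro c h1 h2
    have hc : c ∈ C := amal.inf_eq ▸ ⟨h1, h2⟩
    exact (hbase true c hc).trans (hbase false c hc).symm)
  have hf : ∀ s (a : A s), f a = of (φ := φ) s a := by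
    rintro (_ | _) a
    exacts [hf₂ a, hf₁ a]
  let k : PushoutI φ →* G := lift (fun s => (A s).subtype) C.subtype (fun s => rfl)
  have hk : ∀ s (a : A s), k (of (φ := φ) s a) = a := fun s a => by
    exact lift_of (φ := φ) (fun s => (A s).subtype) C.subtype (fun s => rfl) a
  have hkC : ∀ c : C, k (base φ c) = c := fun c => by
    exact lift_base (φ := φ) (fun s => (A s).subtype) C.subtype (fun s => rfl) c
  have hkf : ∀ g, k (f g) = g := by
    intro g
    have hg : g ∈ A₁ ⊔ A₂ := amal.sup_eq_top ▸ Subgroup.mem_top g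
    have : A₁ ⊔ A₂ ≤ (k.comp f).eqLocus (MonoidHom.id G) := by
      refine sup_le ?_ ?_
      · intro a ha
        change k (f a) = a
        rw [hf true ⟨a, ha⟩]
        exact hk true ⟨a, ha⟩
      · intro a ha
        change k (f a) = a
        rw [hf false ⟨a, ha⟩]
        exact hk false ⟨a, ha⟩
    exact this hg
  have hfk : ∀ x, f (k x) = x := by
    intro x
    have : f.comp k = MonoidHom.id _ := by
      apply hom_ext_nonempty
      intro s
      ext a
      simp [hk, hf]
    exact DFunLike.congr_fun this x
  let W : G → NormalWord d := fun g => f g⁻¹ • NormalWord.empty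
  have hWk : ∀ w : NormalWord d, W (k w.prod)⁻¹ = w := by
    intro w
    simp only [W, inv_inv, hfk]
    exact NormalWord.prod_smul_empty w
  have hkW : ∀ g, k (W g).prod = g⁻¹ := by
    intro g
    simp only [W, NormalWord.prod_smul, NormalWord.prod_empty, mul_one, hkf]
  have hWmul : ∀ s g (a : A s), W (g * a) = of (φ := φ) s a⁻¹ • W g := by
    intro s g a
    simp only [W, mul_inv_rev, map_mul, mul_smul]
    congr 1
    rw [← Subgroup.coe_inv, hf]
  let gate : Bool → G → G := fun s g => (k (NormalWord.pairTail s (W g)).prod)⁻¹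
  have hgate : ∀ s g, g⁻¹ * gate s g = ((NormalWord.equivPair s (W g)).head : G) := by
    intro s g
    have h := congrArg (fun w => k w.prod) (NormalWord.smul_pairTail s (W g))
    simp only [NormalWord.prod_smul, map_mul, hkW] at h
    rw [← h]
    simp [gate, hk]
  have hrange : ∀ s (a : A s), a ∈ (φ s).range ↔ (a : G) ∈ C := by
    intro s a
    constructor
    · rintro ⟨c, rfl⟩
      exact c.2
    · exact fun h => ⟨⟨a, h⟩, rfl⟩
  refine ⟨⟨fun g => (W g).toList.length, gate, ?_, ?_, ?_, ?_, ?_, ?_⟩⟩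
  · intro s g
    rw [hgate]
    exact Subtype.property _
  · intro s g a ha
    have := hWmul s g ⟨a, ha⟩
    simp only at this
    simp only [gate, this, NormalWord.pairTail_smul]
  · intro s
    have : W 1 = NormalWord.empty := by simp [W]
    simp only [gate, this, NormalWord.pairTail_empty]
    simp
  · intro s g h
    rw [hgate, ← hrange] at h
    simp only [gate, hWk]
    exact (NormalWord.length_pairTail_lt s (W g) h).1
  · intro s t g hs ht
    rw [hgate, ← hrange] at hs ht
    have h1 := (NormalWord.length_pairTail_lt s (W g) hs).2
    have h2 := (NormalWord.length_pairTail_lt t (W g) ht).2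
    exact Option.some_injective _ (h1.symm.trans h2)
  · intro g hg
    rcases h : (W g).fstIdx with _ | s
    · exfalso
      have hnil : (W g).toList = [] := by
        simpa [CoprodI.Word.fstIdx] using h
      have hw : (W g).toWord = CoprodI.Word.empty := CoprodI.Word.ext hnil
      have h2 := hkW g
      simp only [NormalWord.prod, hw] at h2
      simp only [CoprodI.Word.prod_empty, map_one, mul_one, hkC] at h2
      apply hg
      rw [← inv_inv g, ← h2]
      exact inv_mem (Subtype.property _)
    · refine ⟨s, ?_⟩
      rw [hgate, ← hrange]
      exact NormalWord.head_notMem_of_fstIdx s (W g) h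

/-- An integer valued geodesic `δ`-hyperbolic (pseudo)metric. -/
structure IsHypMetric {α : Type u} (d : α → α → ℝ) (δ : ℝ) : Prop where
  self : ∀ x, d x x = 0
  comm : ∀ x y, d x y = d y x
  tri : ∀ x y z, d x z ≤ d x y + d y z
  delta_nonneg : 0 ≤ δ
  four : ∀ x y z w, d x z + d y w ≤ d x y + d z w + 2 * δ ∨ d x z + d y w ≤ d y z + d x w + 2 * δ
  nat : ∀ x y, ∃ n : ℕ, d x y = n
  geod : ∀ x y t, 0 ≤ t → t ≤ d x y → ∃ w, t - 1 ≤ d x w ∧ d x w ≤ t ∧ d x w + d w y = d x y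

/-- `p` is a point of `S` nearest to `x`. -/
def IsNearest {α : Type u} (d : α → α → ℝ) (S : Set α) (x p : α) : Prop :=
  p ∈ S ∧ ∀ q ∈ S, d x p ≤ d x q

/-- A quasiconvex subset: every point `w` is about as close to `S` as to a geodesic between two
points of `S`. -/
def QCSet {α : Type u} (d : α → α → ℝ) (K : ℝ) (S : Set α) : Prop :=
  ∀ p ∈ S, ∀ q ∈ S, ∀ w, ∃ s ∈ S, d w s ≤ (d p w + d q w - d p q) / 2 + K

/-- Any two points of `S` are joined in `S` by a coarse path of controlled length. -/
def ChainProp {α : Type u} (d : α → α → ℝ) (c M : ℝ) (S : Set α) : Prop :=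
  ∀ p ∈ S, ∀ q ∈ S, ∃ n : ℕ, (n : ℝ) ≤ c * d p q + c ∧ ∃ f : ℕ → α, f 0 = p ∧ f n = q ∧
    (∀ i ≤ n, f i ∈ S) ∧ ∀ i < n, d (f i) (f (i + 1)) ≤ M

namespace IsHypMetric

variable {α : Type u} {d : α → α → ℝ} {δ : ℝ}

theorem nonneg (h : IsHypMetric d δ) (x y : α) : 0 ≤ d x y := by
  obtain ⟨n, hn⟩ := h.nat x y
  rw [hn]; positivity

theorem exists_isNearest (h : IsHypMetric d δ) {S : Set α} (hS : S.Nonempty) (x : α) :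
    ∃ p, IsNearest d S x p := by
  choose f hf using h.nat x
  obtain ⟨p, hp, hmin⟩ := exists_minimalFor_of_wellFoundedLT (· ∈ S) f hS
  refine ⟨p, hp, fun q hq => ?_⟩
  rw [hf p, hf q]
  rcases le_total (f p) (f q) with h1 | h1
  · exact_mod_cast h1
  · exact_mod_cast hmin hq h1

theorem chain_le (h : IsHypMetric d δ) {w : α} {D M : ℝ} (hM : 0 ≤ M) (N : ℕ) :
    ∀ (f : ℕ → α) (n : ℕ), n ≤ 2 ^ N → (∀ i ≤ n, D ≤ d (f i) w) →
      (∀ i < n, d (f i) (f (i + 1)) ≤ M) →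
      D - M - N * δ ≤ (d (f 0) w + d (f n) w - d (f 0) (f n)) / 2 := by
  induction N with
  | zero =>
    intro f n hn h1 h2
    have hn : n ≤ 1 := by simpa using hn
    interval_cases n
    · have := h1 0 le_rfl
      have := h.self (f 0)
      simp only [Nat.cast_zero]
      linarith
    · have := h1 0 (by norm_num)
      have := h1 1 (by norm_num)
      have := h2 0 (by norm_num)
      simp only [Nat.cast_zero]
      simp only [zero_add] at *
      linarith
  | succ N ih =>
    intro f n hn h1 h2
    set k := min n (2 ^ N)
    have hk : k ≤ n := min_le_left _ _
    have hk' : n - k ≤ 2 ^ N := by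
      rw [pow_succ] at hn
      omega
    have ih1 := ih f k (min_le_right _ _) (fun i hi => h1 i (by omega))
      (fun i hi => h2 i (by omega))
    have ih2 := ih (fun i => f (k + i)) (n - k) hk' (fun i hi => h1 _ (by omega))
      (fun i hi => h2 _ (by omega))
    simp only [add_zero, Nat.add_sub_of_le hk] at ih2
    push_cast
    have := h.comm (f k) (f n)
    have := h.comm (f k) (f 0)
    rcases h.four (f 0) (f k) (f n) w with h3 | h3 <;> linarith

theorem exists_nat_le_mul_two_pow {ε : ℝ} (hε : 0 < ε) :
    ∃ K : ℕ, ∀ k : ℕ, (k : ℝ) ≤ ε * 2 ^ k + K := by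
  have h := tendsto_pow_const_div_const_pow_of_one_lt 1 (r := (2 : ℝ)) (by norm_num)
  obtain ⟨K, hK⟩ := Filter.eventually_atTop.1 (h.eventually_le_const hε)
  refine ⟨K, fun k => ?_⟩
  have h2 : (0 : ℝ) < 2 ^ k := by positivity
  rcases le_total K k with hk | hk
  · have := hK k hk
    rw [pow_one, div_le_iff₀ h2] at this
    have : (0 : ℝ) ≤ K := by positivity
    linarith
  · have : (k : ℝ) ≤ K := by exact_mod_cast hk
    have : 0 < ε * 2 ^ k := by positivity
    linarith

/-- A point far along a geodesic from `w` towards `p ∈ S`, together with a nearby point of `S`. -/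
theorem exists_far_point (h : IsHypMetric d δ) {S : Set α} {w p : α} {D : ℝ} (hD : 0 ≤ D)
    (hp : p ∈ S) (hw : ∀ s ∈ S, D ≤ d w s)
    (hy : ∀ y, d w y + d y p = d w p → ∃ s ∈ S, d y s ≤ D) :
    ∃ y, ∃ z ∈ S, d w y + d y p = d w p ∧ d y z ≤ D ∧ d w y ≤ 2 * D ∧
      D - 1 ≤ (d y w + d z w - d y z) / 2 := by
  rcases le_total (2 * D) (d w p) with h1 | h1
  · obtain ⟨y, hy1, hy2, hy3⟩ := h.geod w p (2 * D) (by linarith) h1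
    obtain ⟨z, hz, hyz⟩ := hy y hy3
    have := hw z hz
    have := h.comm w z
    have := h.comm w y
    exact ⟨y, z, hz, hy3, hyz, hy2, by linarith⟩
  · have := h.self p
    have := hw p hp
    have := h.comm p w
    exact ⟨p, p, hp, by linarith, by linarith, h1, by linarith⟩

/-- Stability of quasigeodesics, for points on a geodesic. -/
theorem exists_morse_const (h : IsHypMetric d δ) {c M : ℝ} (hc : 0 ≤ c) (hM : 0 ≤ M) :
    ∃ D₀ : ℝ, ∀ S : Set α, ChainProp d c M S → ∀ p ∈ S, ∀ q ∈ S, ∀ w,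
      d p w + d w q = d p q → ∃ s ∈ S, d w s ≤ D₀ := by
  have hδ := h.delta_nonneg
  set ε : ℝ := 1 / (12 * (c + 1) * (δ + 1)) with hε
  have hεpos : 0 < ε := by positivity
  obtain ⟨K, hK⟩ := exists_nat_le_mul_two_pow hεpos
  refine ⟨2 * (1 + M + 3 * δ + 1 + δ * K), fun S hS p hp q hq w₀ hw₀ => ?_⟩
  classical
  let P : ℕ → Prop := fun n => ∃ w, d p w + d w q = d p q ∧ ∀ s ∈ S, (n : ℝ) ≤ d w s
  obtain ⟨B, hB⟩ := h.nat p q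
  have hPB : ∀ n, P n → n ≤ B := by
    rintro n ⟨w, hw1, hw2⟩
    have h1 := hw2 p hp
    have h2 := h.comm w p
    have h3 := h.nonneg w q
    have : (n : ℝ) ≤ B := by linarith
    exact_mod_cast this
  have hP0 : P 0 := ⟨w₀, hw₀, fun s _ => by simpa using h.nonneg w₀ s⟩
  set n₀ := Nat.findGreatest P B with hn₀
  obtain ⟨w, hw1, hw2⟩ : P n₀ := Nat.findGreatest_spec (Nat.zero_le B) hP0
  have hclose : ∀ y, d p y + d y q = d p q → ∃ s ∈ S, d y s ≤ n₀ := by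
    intro y hy
    by_contra hcon
    push Not at hcon
    have hP1 : P (n₀ + 1) := by
      refine ⟨y, hy, fun s hs => ?_⟩
      obtain ⟨m, hm⟩ := h.nat y s
      have := hcon s hs
      rw [hm] at this ⊢
      exact_mod_cast this
    have := Nat.le_findGreatest (hPB _ hP1) hP1
    omega
  suffices hn : (n₀ : ℝ) ≤ 2 * (1 + M + 3 * δ + 1 + δ * K) by
    obtain ⟨s, hs, hs'⟩ := hclose w₀ hw₀
    exact ⟨s, hs, hs'.trans hn⟩
  set D : ℝ := (n₀ : ℝ)
  have hD : 0 ≤ D := by positivity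
  obtain ⟨y, z, hz, hy1, hyz, hy2, hy3⟩ := h.exists_far_point hD hp hw2 (fun y hy => by
    apply hclose
    have := h.comm p y
    have := h.comm p w
    have := h.comm w y
    have := h.tri y w q
    have := h.tri p y q
    linarith)
  obtain ⟨y', z', hz', hy1', hyz', hy2', hy3'⟩ := h.exists_far_point hD hq hw2 (fun y hy => by
    apply hclose
    have := h.tri p w y
    have := h.tri p y q
    linarith)
  obtain ⟨n, hn, f, hf0, hfn, hfS, hfM⟩ := hS z hz z' hz'
  have hzz : d z z' ≤ 6 * D := by
    have := h.tri z y z'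
    have := h.tri y w z'
    have := h.tri w y' z'
    have := h.comm z y
    have := h.comm y w
    linarith
  have hn' : (n : ℝ) ≤ c * (6 * D + 1) := by nlinarith
  have hlog : δ * (Nat.log 2 n : ℝ) ≤ (6 * D + 1) / 12 + δ * K := by
    have h1 := hK (Nat.log 2 n)
    have h2 : ε * 2 ^ Nat.log 2 n ≤ ε * (c * (6 * D + 1) + 1) := by
      gcongr
      rcases Nat.eq_zero_or_pos n with h0 | h0
      · rw [h0]; simp; positivity
      · have : ((2 ^ Nat.log 2 n : ℕ) : ℝ) ≤ n := by exact_mod_cast Nat.pow_log_le_self 2 h0.ne'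
        push_cast at this
        linarith
    have h3 : c * (6 * D + 1) + 1 ≤ (c + 1) * (6 * D + 1) := by nlinarith
    have h4 : δ * (ε * ((c + 1) * (6 * D + 1))) ≤ (6 * D + 1) / 12 := by
      have : δ * (ε * ((c + 1) * (6 * D + 1))) = (δ / (δ + 1)) * ((6 * D + 1) / 12) := by
        rw [hε]; field_simp
      rw [this]
      have h5 : δ / (δ + 1) ≤ 1 := by rw [div_le_one (by linarith)]; linarith
      have h6 : 0 ≤ (6 * D + 1) / 12 := by positivity
      nlinarith
    calc δ * (Nat.log 2 n : ℝ) ≤ δ * (ε * ((c + 1) * (6 * D + 1)) + K) := by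
          gcongr
          have := mul_le_mul_of_nonneg_left h3 hεpos.le
          linarith
      _ ≤ _ := by linarith
  have hchain := h.chain_le (w := w) (D := D) hM (Nat.log 2 n + 1) f n
    (Nat.lt_pow_succ_log_self (by norm_num) n).le
    (fun i hi => by rw [h.comm]; exact hw2 _ (hfS i hi)) hfM
  rw [hf0, hfn] at hchain
  push_cast at hchain
  have hyy : d y y' = d y w + d y' w := by
    have := h.tri p y q
    have := h.tri y y' q
    have := h.tri y w y'
    have := h.comm p y
    have := h.comm p w
    have := h.comm w y
    have := h.comm w y'
    linarith
  have e1 := h.four y z z' w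
  have e2 := h.four y z' y' w
  have := h.comm y' z'
  have : 0 ≤ δ * K := by positivity
  rcases e1 with e1 | e1 <;> rcases e2 with e2 | e2 <;> linarith

theorem exists_qcSet_of_chainProp (h : IsHypMetric d δ) {c M : ℝ} (hc : 0 ≤ c) (hM : 0 ≤ M) :
    ∃ K : ℝ, ∀ S : Set α, ChainProp d c M S → QCSet d K S := by
  obtain ⟨D, hD⟩ := h.exists_morse_const hc hM
  refine ⟨D + 1 + 2 * δ, fun S hS p hp q hq w => ?_⟩
  have := h.comm p w
  have := h.comm q w
  have := h.tri p w q
  have := h.tri w p q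
  have := h.tri p q w
  have hδ := h.delta_nonneg
  obtain ⟨m, hm1, hm2, hm3⟩ := h.geod p q ((d p w + d p q - d w q) / 2)
    (by linarith) (by linarith)
  obtain ⟨s, hs, hms⟩ := hD S hS p hp q hq m hm3
  refine ⟨s, hs, ?_⟩
  have := h.tri w m s
  have := h.comm w m
  have := h.comm q m
  have := h.comm p m
  rcases h.four w p m q with h1 | h1 <;> linarith

theorem gromov_le_of_isNearest (h : IsHypMetric d δ) {K : ℝ} {S : Set α} (hS : QCSet d K S)
    {x p q : α} (hp : IsNearest d S x p) (hq : q ∈ S) :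
    (d x p + d q p - d x q) / 2 ≤ K + δ + 1 := by
  have hδ := h.delta_nonneg
  have := h.comm p x
  have := h.tri x p q
  have := h.comm p q
  have := h.tri p x q
  have := h.tri q x p
  have := h.comm q x
  obtain ⟨w, hw1, hw2, hw3⟩ := h.geod p x ((d x p + d q p - d x q) / 2)
    (by linarith) (by linarith)
  obtain ⟨s, hs, hws⟩ := hS p hp.1 q hq w
  have := hp.2 s hs
  have := h.tri x w s
  have := h.comm x w
  have := h.comm p w
  rcases h.four q p w x with h1 | h1 <;> linarith

theorem isNearest_dichotomy (h : IsHypMetric d δ) {K : ℝ} {S : Set α} (hS : QCSet d K S)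
    {x y p q : α} (hp : IsNearest d S x p) (hq : IsNearest d S y q) :
    d x p + d y q + d p q ≤ d x y + 4 * (K + δ + 1) + 2 * δ ∨ d p q ≤ 2 * (K + δ + 1) + δ := by
  have h1 := h.gromov_le_of_isNearest hS hp hq.1
  have h2 := h.gromov_le_of_isNearest hS hq hp.1
  have := h.comm p q
  have := h.comm y p
  have := h.comm y q
  have := h.comm p x
  have := h.comm q x
  rcases h.four x y q p with h3 | h3
  · left; linarith
  · right; linarith

theorem qc_const_nonneg (h : IsHypMetric d δ) {K : ℝ} {S : Set α} (hS : QCSet d K S)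
    {p : α} (hp : p ∈ S) : 0 ≤ K := by
  obtain ⟨s, _, h1⟩ := hS p hp p hp p
  have := h.nonneg p s
  have := h.self p
  linarith

theorem dist_le_of_isNearest (h : IsHypMetric d δ) {K : ℝ} {S : Set α} (hS : QCSet d K S)
    {x y p q : α} (hp : IsNearest d S x p) (hq : IsNearest d S y q) :
    d p q ≤ d x y + (4 * (K + δ + 1) + 2 * δ) := by
  have := h.qc_const_nonneg hS hp.1
  have := h.delta_nonneg
  have := h.nonneg x y
  have := h.nonneg x p
  have := h.nonneg y q
  rcases h.isNearest_dichotomy hS hp hq with h1 | h1 <;> linarith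

/-- If two points of `S'` have distant projections to `S`, then these are close to `S'`. -/
theorem exists_close_of_isNearest (h : IsHypMetric d δ) {K : ℝ} {S S' : Set α} (hS : QCSet d K S)
    (hS' : QCSet d K S') {y y' p p' : α} (hy : y ∈ S') (hy' : y' ∈ S')
    (hp : IsNearest d S y p) (hp' : IsNearest d S y' p')
    (hfar : 2 * (K + δ + 1) + δ < d p p') :
    ∃ s ∈ S', d p s ≤ 2 * (K + δ + 1) + δ + K := by
  obtain ⟨s, hs, h1⟩ := hS' y hy y' hy' p
  refine ⟨s, hs, ?_⟩
  have := h.tri y' p' p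
  have := h.comm p p'
  rcases h.isNearest_dichotomy hS hp hp' with h2 | h2 <;> linarith

theorem qcSet_of_hausdorff (h : IsHypMetric d δ) {K R : ℝ} {S T : Set α} (hS : QCSet d K S)
    (hTS : ∀ t ∈ T, ∃ s ∈ S, d t s ≤ R) (hST : ∀ s ∈ S, ∃ t ∈ T, d s t ≤ R) :
    QCSet d (K + 3 * R) T := by
  intro p hp q hq w
  obtain ⟨p', hp', h1⟩ := hTS p hp
  obtain ⟨q', hq', h2⟩ := hTS q hq
  obtain ⟨s, hs, h3⟩ := hS p' hp' q' hq' w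
  obtain ⟨t, ht, h4⟩ := hST s hs
  refine ⟨t, ht, ?_⟩
  have := h.tri w s t
  have := h.tri p' p w
  have := h.tri q' q w
  have := h.tri p p' q
  have := h.tri p' q' q
  have := h.comm p p'
  have := h.comm q q'
  linarith

theorem qcSet_of_bounded (h : IsHypMetric d δ) {K : ℝ} {S : Set α}
    (hS : ∀ p ∈ S, ∀ q ∈ S, d p q ≤ K) : QCSet d K S := by
  intro p hp q hq w
  refine ⟨p, hp, ?_⟩
  have := hS p hp q hq
  have := h.tri p q w
  have := h.comm p w
  linarith

end IsHypMetric

theorem QCSet.mono {α : Type u} {d : α → α → ℝ} {K K' : ℝ} {S : Set α} (hS : QCSet d K S)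
    (hK : K ≤ K') : QCSet d K' S := by
  intro p hp q hq w
  obtain ⟨s, hs, h1⟩ := hS p hp q hq w
  exact ⟨s, hs, by linarith⟩

section WordMetric

variable {G : Type u} [Group G] {X : Set G}

theorem IsSymmGen.exists_word (hX : IsSymmGen X) (g : G) :
    ∃ l : List G, (∀ x ∈ l, x ∈ X) ∧ l.prod = g ∧ l.length = wordLength X g := by
  have hne : {n : ℕ | ∃ l : List G, l.length = n ∧ (∀ x ∈ l, x ∈ X) ∧ l.prod = g}.Nonempty := by
    have hg : g ∈ Subgroup.closure X := hX.2.2 ▸ Subgroup.mem_top g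
    rw [← Subgroup.mem_toSubmonoid, Subgroup.closure_toSubmonoid] at hg
    obtain ⟨l, hl, hp⟩ := Submonoid.exists_list_of_mem_closure hg
    refine ⟨l.length, l, rfl, fun x hx => ?_, hp⟩
    rcases hl x hx with h | h
    · exact h
    · simpa using hX.2.1 _ (Set.mem_inv.1 h)
  obtain ⟨l, h1, h2, h3⟩ := Nat.sInf_mem hne
  exact ⟨l, h2, h3, h1⟩

theorem wordLength_prod_le {l : List G} (hl : ∀ x ∈ l, x ∈ X) :
    wordLength X l.prod ≤ l.length :=
  Nat.sInf_le ⟨l, rfl, hl, rfl⟩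

theorem wordLength_one : wordLength X (1 : G) = 0 :=
  Nat.le_zero.1 (wordLength_prod_le (X := X) (l := []) (by simp))

theorem IsSymmGen.wordLength_mul_le (hX : IsSymmGen X) (g h : G) :
    wordLength X (g * h) ≤ wordLength X g + wordLength X h := by
  obtain ⟨l, h1, h2, h3⟩ := hX.exists_word g
  obtain ⟨l', h1', h2', h3'⟩ := hX.exists_word h
  have := wordLength_prod_le (X := X) (l := l ++ l') (by
    intro x hx
    rcases List.mem_append.1 hx with h | h
    exacts [h1 x h, h1' x h])
  rwa [List.prod_append, List.length_append, h2, h2', h3, h3'] at this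

theorem IsSymmGen.wordLength_inv_le (hX : IsSymmGen X) (g : G) :
    wordLength X g⁻¹ ≤ wordLength X g := by
  obtain ⟨l, h1, h2, h3⟩ := hX.exists_word g
  have := wordLength_prod_le (X := X) (l := (l.map (·⁻¹)).reverse) (by
    intro x hx
    simp only [List.mem_reverse, List.mem_map] at hx
    obtain ⟨y, hy, rfl⟩ := hx
    exact hX.2.1 y (h1 y hy))
  rwa [← List.prod_inv_reverse, List.length_reverse, List.length_map, h2, h3] at this

theorem IsSymmGen.wordLength_inv (hX : IsSymmGen X) (g : G) :
    wordLength X g⁻¹ = wordLength X g :=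
  le_antisymm (hX.wordLength_inv_le g) (by simpa using hX.wordLength_inv_le g⁻¹)

theorem IsSymmGen.finite_ball (hX : IsSymmGen X) (n : ℕ) : {g : G | wordLength X g ≤ n}.Finite := by
  have key : ∀ n, {g : G | ∃ l : List G, l.length = n ∧ (∀ x ∈ l, x ∈ X) ∧ l.prod = g}.Finite := by
    intro n
    induction n with
    | zero =>
      refine (Set.finite_singleton 1).subset ?_
      rintro g ⟨l, hl, -, rfl⟩
      simp [List.length_eq_zero_iff.1 hl]
    | succ n ih =>
      refine (hX.1.mul ih).subset ?_
      rintro g ⟨_ | ⟨a, l⟩, hl, hl', rfl⟩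
      · simp at hl
      · simp only [List.prod_cons]
        exact Set.mul_mem_mul (hl' a (by simp))
          ⟨l, by simpa using hl, fun x hx => hl' x (by simp [hx]), rfl⟩
  refine ((Set.finite_Iic n).biUnion (fun i _ => key i)).subset ?_
  intro g hg
  obtain ⟨l, h1, h2, h3⟩ := hX.exists_word g
  exact Set.mem_biUnion (x := wordLength X g) hg ⟨l, h3, h1, h2⟩

/-- A left invariant proper hyperbolic metric on a group. -/
structure IsHypGroup (d : G → G → ℝ) (δ : ℝ) : Prop extends IsHypMetric d δ where
  left : ∀ g x y, d (g * x) (g * y) = d x y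
  proper : ∀ R, {g | d 1 g ≤ R}.Finite

theorem IsSymmGen.isHypGroup (hX : IsSymmGen X) {δ : ℝ} (hδ : 0 ≤ δ)
    (h : ∀ x y z w : G,
      gromovProd X x z w ≥ min (gromovProd X x y w) (gromovProd X y z w) - δ) :
    IsHypGroup (fun x y : G => (wordDist X x y : ℝ)) δ := by
  have hcomm : ∀ x y : G, wordDist X x y = wordDist X y x := by
    intro x y
    rw [wordDist, wordDist, ← hX.wordLength_inv]
    congr 1
    group
  have htri : ∀ x y z : G, wordDist X x z ≤ wordDist X x y + wordDist X y z := by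
    intro x y z
    have := hX.wordLength_mul_le (x⁻¹ * y) (y⁻¹ * z)
    rwa [mul_assoc, mul_inv_cancel_left] at this
  refine { self := ?_, comm := ?_, tri := ?_, delta_nonneg := hδ, four := ?_, nat := ?_,
           geod := ?_, left := ?_, proper := ?_ }
  · intro x
    simp [wordDist, wordLength_one]
  · intro x y
    exact_mod_cast hcomm x y
  · intro x y z
    exact_mod_cast htri x y z
  · intro x y z w
    have h1 := h x y z w
    simp only [gromovProd, ge_iff_le, sub_le_iff_le_add, min_le_iff] at h1
    rcases h1 with h1 | h1
    · left; linarith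
    · right; linarith
  · intro x y
    exact ⟨_, rfl⟩
  · intro x y t ht0 ht1
    obtain ⟨l, h1, h2, h3⟩ := hX.exists_word (x⁻¹ * y)
    set k := ⌊t⌋₊
    have hkt : (k : ℝ) ≤ t := Nat.floor_le ht0
    have hkt' : t < k + 1 := Nat.lt_floor_add_one t
    have hk : k ≤ l.length := by
      rw [h3]
      have : (k : ℝ) ≤ wordDist X x y := hkt.trans ht1
      exact_mod_cast this
    have e1 : wordDist X x (x * (l.take k).prod) ≤ k := by
      rw [wordDist, inv_mul_cancel_left]
      refine (wordLength_prod_le fun a ha => h1 a (List.mem_of_mem_take ha)).trans ?_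
      simp
    have e2 : wordDist X (x * (l.take k).prod) y ≤ l.length - k := by
      have : (x * (l.take k).prod)⁻¹ * y = (l.drop k).prod := by
        rw [inv_mul_eq_iff_eq_mul, mul_assoc, List.prod_take_mul_prod_drop, h2,
          mul_inv_cancel_left]
      rw [wordDist, this]
      refine (wordLength_prod_le fun a ha => h1 a (List.mem_of_mem_drop ha)).trans ?_
      simp
    have e3 := htri x (x * (l.take k).prod) y
    have e4 : wordDist X x y = l.length := h3.symm
    have e5 : wordDist X x (x * (l.take k).prod) = k := by omega
    have e6 : wordDist X x (x * (l.take k).prod) + wordDist X (x * (l.take k).prod) y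
      = wordDist X x y := by omega
    refine ⟨x * (l.take k).prod, ?_, ?_, by exact_mod_cast e6⟩ <;> rw [e5] <;> linarith
  · intro g x y
    simp only [wordDist]
    congr 2
    group
  · intro R
    refine (hX.finite_ball ⌊R⌋₊).subset fun g hg => ?_
    simp only [wordDist, inv_one, one_mul, Set.mem_ofPred_eq] at hg ⊢
    exact Nat.le_floor hg

end WordMetric

namespace IsHypGroup

variable {G : Type u} [Group G] {d : G → G → ℝ} {δ : ℝ}

theorem left_one (h : IsHypGroup d δ) (x y : G) : d x y = d 1 (x⁻¹ * y) := by
  have := h.left x⁻¹ x y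
  rw [← this, inv_mul_cancel]

theorem inv (h : IsHypGroup d δ) (x : G) : d 1 x⁻¹ = d 1 x := by
  rw [h.comm, h.left_one]; simp

theorem right (h : IsHypGroup d δ) (x y : G) : d x (x * y) = d 1 y := by
  rw [h.left_one]; simp

theorem finite_bddAbove (_h : IsHypGroup d δ) {F : Set G} (hF : F.Finite) :
    ∃ R, 0 ≤ R ∧ ∀ f ∈ F, d 1 f ≤ R := by
  obtain ⟨R, hR⟩ := (hF.image (d 1)).bddAbove
  exact ⟨max R 0, le_max_right _ _, fun f hf => (hR ⟨f, hf, rfl⟩).trans (le_max_left _ _)⟩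

/-- If `g` moves `e` much less than it moves `w`, and the geodesic from `e` to `w`
leaves `w` away from `g w`, then `w, g w, g² w` is nearly geodesic. -/
theorem dist_sq_ge (h : IsHypGroup d δ) {g w e : G} {ρ : ℝ} (he : d e (g * e) ≤ ρ)
    (hfar : 2 * ρ + 4 * δ < d e w) (hgw : 8 * δ < d w (g * w))
    (hlow : (d w (g * w) + d e (g * w) - d w e) / 2 ≤ 3 * δ) :
    2 * d w (g * w) - 8 * δ ≤ d w (g * (g * w)) := by
  have hδ := h.delta_nonneg
  have l1 := h.left g w (g * w)
  have l2 := h.left g e (g * w)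
  have l3 := h.left g w e
  have l4 := h.left g e w
  have t1 := h.tri (g * e) e (g * w)
  have t2 := h.tri e (g * e) (g * w)
  have t3 := h.tri (g * e) e (g * (g * w))
  have t4 := h.tri e (g * e) (g * (g * w))
  have c1 := h.comm e (g * e)
  have c2 := h.comm (g * w) (g * e)
  have c3 := h.comm w e
  have c4 := h.comm (g * w) e
  have c5 := h.comm (g * (g * w)) (g * w)
  have c6 := h.comm (g * (g * w)) e
  have c7 := h.comm (g * w) w
  have h1 : (d (g * w) (g * (g * w)) + d e (g * (g * w)) - d (g * w) e) / 2 ≤ 4 * δ := by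
    rcases h.four (g * w) e (g * e) (g * (g * w)) with q | q <;> linarith
  rcases h.four w (g * (g * w)) e (g * w) with q | q <;> linarith

/-- Elements of infinite order are undistorted. -/
theorem exists_pow_le (h : IsHypGroup d δ) {z : G} (hz : ¬ IsOfFinOrder z) :
    ∃ c : ℝ, 0 ≤ c ∧ ∀ n : ℕ, (n : ℝ) ≤ c * d 1 (z ^ n) + c := by
  have hδ := h.delta_nonneg
  have hinj : Function.Injective fun n : ℕ => z ^ n := injective_pow_iff_not_isOfFinOrder.2 hz
  set R := 10 * δ + 1 with hR
  have hfin := h.proper R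
  set N := {g | d 1 g ≤ R}.ncard with hN
  have hpig : ∀ w : G, ∃ k, 1 ≤ k ∧ k ≤ N + 1 ∧ R < d w (z ^ k * w) := by
    intro w
    by_contra! hcon
    have hsub : ((fun k : ℕ => w⁻¹ * z ^ k * w) '' (Finset.Icc 1 (N + 1) : Set ℕ)) ⊆
        {g | d 1 g ≤ R} := by
      rintro _ ⟨k, hk, rfl⟩
      simp only [Finset.coe_Icc, Set.mem_Icc] at hk
      have := hcon k hk.1 hk.2
      rwa [h.left_one, ← mul_assoc] at this
    have h1 := Set.ncard_le_ncard hsub hfin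
    rw [Set.ncard_image_of_injective, Set.ncard_coe_finset, Nat.card_Icc] at h1
    · omega
    · intro a b hab
      simp only [mul_left_inj, mul_right_inj] at hab
      exact hinj hab
  obtain ⟨ρ, hρ0, hρ⟩ := h.finite_bddAbove ((Set.finite_Iic (N + 1)).image fun k : ℕ => z ^ k)
  replace hρ : ∀ k ≤ N + 1, d 1 (z ^ k) ≤ ρ := fun k hk => hρ _ ⟨k, hk, rfl⟩
  obtain ⟨n, hn⟩ : ∃ n : ℕ, 2 * (2 * ρ + 4 * δ + 2) < d 1 (z ^ n) := by
    by_contra! hcon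
    exact Set.infinite_range_of_injective hinj
      ((h.proper _).subset (by rintro _ ⟨n, rfl⟩; exact hcon n))
  obtain ⟨w, hw1, hw2, hw3⟩ := h.geod 1 (z ^ n) (d 1 (z ^ n) / 2) (by linarith) (by linarith)
  obtain ⟨k, hk1, hk2, hk3⟩ := hpig w
  set g := z ^ k with hg
  have hgx : d 1 (g * 1) ≤ ρ := by simpa using hρ k hk2
  have hgy : d (z ^ n) (g * z ^ n) ≤ ρ := by
    have : g * z ^ n = z ^ n * g := ((Commute.refl z).pow_pow k n).eq
    rw [this, h.right]
    exact hρ k hk2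
  have hsq : 2 * d w (g * w) - 8 * δ ≤ d w (g * (g * w)) := by
    generalize (1 : G) = x at *
    generalize z ^ n = y at *
    have l1 := h.left g x w
    have l2 := h.left g w y
    have l3 := h.left g x y
    have c1 := h.comm x (g * x)
    have c2 := h.comm y (g * y)
    have c3 := h.comm y (g * w)
    have c4 := h.comm (g * y) (g * w)
    have c5 := h.comm x w
    have c6 := h.comm y w
    have c7 := h.comm (g * x) (g * y)
    have c8 := h.comm y x
    have t1 := h.tri (g * x) x (g * w)
    have t2 := h.tri (g * y) y (g * w)
    have t3 := h.tri x (g * x) (g * w)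
    have t4 := h.tri y (g * y) (g * w)
    have h1 : (d x (g * w) + d (g * y) (g * w) - d x (g * y)) / 2 ≤ δ := by
      rcases h.four (g * x) x (g * y) (g * w) with q | q <;> linarith
    have h2 : (d x (g * w) + d y (g * w) - d x y) / 2 ≤ 2 * δ := by
      rcases h.four x y (g * y) (g * w) with q | q <;> linarith
    rcases h.four x w y (g * w) with q | q
    · exact h.dist_sq_ge hgx (by linarith) (by linarith) (by linarith)
    · exact h.dist_sq_ge hgy (by linarith) (by linarith) (by linarith)
  have hstep : ∀ m : ℕ, d w (g ^ m * w) + 1 ≤ d w (g ^ (m + 1) * w) := by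
    have h0 := h.self w
    have hs : d w (g * w) - 10 * δ > 1 := by linarith
    suffices H : ∀ m : ℕ, d w (g ^ m * w) + (d w (g * w) - 10 * δ) ≤ d w (g ^ (m + 1) * w) by
      intro m
      linarith [H m]
    intro m
    induction m with
    | zero =>
      simp only [pow_zero, one_mul, zero_add, pow_one]
      linarith
    | succ m ih =>
      have e1 : d (g * w) (g ^ (m + 2) * w) = d w (g ^ (m + 1) * w) := by
        rw [pow_succ' g (m + 1), mul_assoc, h.left]
      have e2 : d (g * (g * w)) (g ^ (m + 2) * w) = d w (g ^ m * w) := by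
        rw [pow_succ' g (m + 1), mul_assoc, h.left, pow_succ', mul_assoc, h.left]
      have e3 := h.left g w (g * w)
      rcases h.four w (g * w) (g * (g * w)) (g ^ (m + 2) * w) with q | q
      · linarith
      · change _ ≤ d w (g ^ (m + 2) * w)
        linarith
  have hlin : ∀ m : ℕ, (m : ℝ) ≤ d w (g ^ m * w) := by
    intro m
    induction m with
    | zero => simpa using h.nonneg w w
    | succ m ih =>
      push_cast
      linarith [hstep m]
  have hlin' : ∀ m : ℕ, (m : ℝ) ≤ d 1 (g ^ m) + 2 * d 1 w := by
    intro m
    have t1 := h.tri w 1 (g ^ m * w)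
    have t2 := h.tri 1 (g ^ m) (g ^ m * w)
    have := h.right (g ^ m) w
    have := h.comm w 1
    linarith [hlin m]
  have hw0 := h.nonneg 1 w
  refine ⟨k * (ρ + 2 * d 1 w + 1), by positivity, fun m => ?_⟩
  have hm := Nat.div_add_mod m k
  have hr : m % k < k := Nat.mod_lt _ (by omega)
  have e1 : z ^ m = g ^ (m / k) * z ^ (m % k) := by
    rw [hg, ← pow_mul, ← pow_add, hm]
  have t1 := h.tri 1 (z ^ m) (g ^ (m / k))
  have e2 : d (z ^ m) (g ^ (m / k)) ≤ ρ := by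
    rw [h.comm, e1, h.right]
    exact hρ _ (by omega)
  have e3 := hlin' (m / k)
  have hz0 := h.nonneg 1 (z ^ m)
  have hmr : (m : ℝ) ≤ k * ((m / k : ℕ) + 1) := by
    have : m ≤ k * (m / k + 1) := by
      rw [mul_add, mul_one]
      omega
    exact_mod_cast this
  have e4 : ((m / k : ℕ) : ℝ) + 1 ≤ d 1 (z ^ m) + (ρ + 2 * d 1 w + 1) := by linarith
  have hk0 : (0 : ℝ) ≤ k := by positivity
  calc (m : ℝ) ≤ k * (d 1 (z ^ m) + (ρ + 2 * d 1 w + 1)) :=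
        hmr.trans (mul_le_mul_of_nonneg_left e4 hk0)
    _ ≤ k * (ρ + 2 * d 1 w + 1) * d 1 (z ^ m) + k * (ρ + 2 * d 1 w + 1) := by
        have : 0 ≤ (k : ℝ) * ((ρ + 2 * d 1 w) * d 1 (z ^ m)) := by positivity
        linarith

/-- Infinite cyclic subgroups of a hyperbolic group are quasiconvex. -/
theorem exists_qcSet_zpowers (h : IsHypGroup d δ) {z : G} (hz : ¬ IsOfFinOrder z) :
    ∃ K, QCSet d K (Subgroup.zpowers z : Set G) := by
  obtain ⟨c, hc, hlen⟩ := h.exists_pow_le hz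
  obtain ⟨K, hK⟩ := h.exists_qcSet_of_chainProp hc (h.nonneg 1 z)
  refine ⟨K, hK _ ?_⟩
  intro p hp q hq
  obtain ⟨m, hm⟩ : ∃ m : ℤ, z ^ m = p⁻¹ * q := mul_mem (inv_mem hp) hq
  obtain ⟨y, hy, hy1, n, hn, hn'⟩ : ∃ y ∈ Subgroup.zpowers z, d 1 y = d 1 z ∧
      ∃ n : ℕ, y ^ n = p⁻¹ * q ∧ d 1 (y ^ n) = d 1 (z ^ n) := by
    obtain ⟨n, rfl | rfl⟩ := m.eq_nat_or_neg
    · exact ⟨z, Subgroup.mem_zpowers z, rfl, n, by simpa using hm, rfl⟩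
    · refine ⟨z⁻¹, inv_mem (Subgroup.mem_zpowers z), h.inv z, n, by simpa using hm, ?_⟩
      rw [inv_pow, h.inv]
  refine ⟨n, ?_, fun i => p * y ^ i, by simp, by simp [hn], fun i _ => mul_mem hp (pow_mem hy i),
    fun i _ => ?_⟩
  · rw [h.left_one p q, ← hn, hn']
    exact hlen n
  · simp only [pow_succ, ← mul_assoc, h.right, hy1, le_refl]

end IsHypGroup

/-- A subgroup is a finite union of cosets of the cyclic group generated by one of its elements. -/
def IsVC {G : Type u} [Group G] (C : Subgroup G) : Prop :=
  ∃ z ∈ C, ∃ F : Set G, F.Finite ∧ F ⊆ C ∧ ∀ c ∈ C, ∃ i : ℤ, ∃ f ∈ F, c = z ^ i * f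

section VC

variable {G : Type u} [Group G] {C : Subgroup G}

theorem IsVirtuallyCyclic.isVC (h : IsVirtuallyCyclic C) : IsVC C := by
  obtain ⟨Z, hZ, hfin⟩ := h
  obtain ⟨z, hz⟩ := hZ.exists_generator
  refine ⟨(z : C), (z : C).2, Set.range fun q : C ⧸ Z => ((q.out⁻¹ : C) : G), Set.finite_range _,
    ?_, ?_⟩
  · rintro _ ⟨q, rfl⟩
    exact Subtype.property _
  · intro c hc
    set c' : C := ⟨c, hc⟩
    have h1 : (((c'⁻¹ : C) : C ⧸ Z).out)⁻¹ * c'⁻¹ ∈ Z := QuotientGroup.eq.1 (Quotient.out_eq' _)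
    obtain ⟨i, hi⟩ := hz ⟨_, h1⟩
    refine ⟨-i, _, ⟨((c'⁻¹ : C) : C ⧸ Z), rfl⟩, ?_⟩
    have h2 : ((z : C)) ^ i = (((c'⁻¹ : C) : C ⧸ Z).out)⁻¹ * c'⁻¹ := by
      have := congrArg (Subtype.val) hi
      simpa using this
    have h3 : c' = (z : C) ^ (-i) * (((c'⁻¹ : C) : C ⧸ Z).out)⁻¹ := by
      rw [zpow_neg, h2]; group
    have := congrArg (Subtype.val) h3
    simpa using this

theorem IsVC.exists_qcSet (hC : IsVC C) {d : G → G → ℝ} {δ : ℝ} (h : IsHypGroup d δ) :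
    ∃ K, QCSet d K (C : Set G) := by
  obtain ⟨z, hz, F, hF, hFC, hcov⟩ := hC
  by_cases hzf : IsOfFinOrder z
  · have hfin : (C : Set G).Finite := by
      have h1 : (Subgroup.zpowers z : Set G).Finite := finite_zpowers.2 hzf
      refine (h1.mul hF).subset fun c hc => ?_
      obtain ⟨i, f, hf, rfl⟩ := hcov c hc
      exact Set.mul_mem_mul ⟨i, rfl⟩ hf
    obtain ⟨R, -, hR⟩ := h.finite_bddAbove hfin
    refine ⟨R, h.qcSet_of_bounded fun p hp q hq => ?_⟩
    rw [h.left_one]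
    exact hR _ (mul_mem (inv_mem hp) hq)
  · obtain ⟨K, hK⟩ := h.exists_qcSet_zpowers hzf
    obtain ⟨R, hR0, hR⟩ := h.finite_bddAbove hF
    refine ⟨K + 3 * R, h.qcSet_of_hausdorff hK ?_ ?_⟩
    · intro c hc
      obtain ⟨i, f, hf, rfl⟩ := hcov c hc
      refine ⟨z ^ i, ⟨i, rfl⟩, ?_⟩
      rw [h.comm, h.right]
      exact hR f hf
    · rintro _ ⟨i, rfl⟩
      refine ⟨z ^ i, zpow_mem hz i, ?_⟩
      simpa [h.self] using hR0

theorem IsVC.fg_of_le (hC : IsVC C) {D : Subgroup G} (hD : D ≤ C) : D.FG := by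
  obtain ⟨z, hz, F, hF, hFC, hcov⟩ := hC
  obtain ⟨y, hy⟩ : ∃ y, D ⊓ Subgroup.zpowers z = Subgroup.zpowers y := by
    have : IsCyclic (D ⊓ Subgroup.zpowers z : Subgroup G) :=
      isCyclic_of_injective (Subgroup.inclusion (inf_le_right : D ⊓ Subgroup.zpowers z ≤ _))
        (Subgroup.inclusion_injective _)
    exact Subgroup.isCyclic_iff_exists_zpowers_eq_top _ |>.1 this |>.imp fun _ h => h.symm
  classical
  let e : G → G := fun f => if h : ∃ x ∈ D, ∃ i : ℤ, x = z ^ i * f then h.choose else 1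
  have he : ∀ f, e f ∈ D := by
    intro f
    simp only [e]
    split_ifs with h
    · exact h.choose_spec.1
    · exact one_mem D
  rw [Subgroup.fg_iff]
  refine ⟨insert y (e '' F), le_antisymm ?_ ?_, (hF.image e).insert y⟩
  · rw [Subgroup.closure_le]
    rintro x (rfl | ⟨f, -, rfl⟩)
    · exact ((hy ▸ Subgroup.mem_zpowers x : x ∈ D ⊓ Subgroup.zpowers z)).1
    · exact he f
  · intro x hx
    obtain ⟨i, f, hf, hxf⟩ := hcov x (hD hx)
    have hex : ∃ x ∈ D, ∃ i : ℤ, x = z ^ i * f := ⟨x, hx, i, hxf⟩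
    have hef : ∃ j : ℤ, e f = z ^ j * f := by
      simp only [e, dif_pos hex]
      exact hex.choose_spec.2
    obtain ⟨j, hj⟩ := hef
    have h1 : x * (e f)⁻¹ ∈ D ⊓ Subgroup.zpowers z := by
      refine ⟨D.mul_mem hx (D.inv_mem (he f)), i - j, ?_⟩
      simp only [hxf, hj, zpow_sub]
      group
    rw [hy] at h1
    have h2 : Subgroup.zpowers y ≤ Subgroup.closure (insert y (e '' F)) := by
      rw [Subgroup.zpowers_le]
      exact Subgroup.subset_closure (Set.mem_insert _ _)
    have h3 : e f ∈ Subgroup.closure (insert y (e '' F)) :=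
      Subgroup.subset_closure (Set.mem_insert_of_mem _ ⟨f, hf, rfl⟩)
    simpa using mul_mem (h2 h1) h3

theorem IsVC.exists_finite_cover (hC : IsVC C) {D : Subgroup G} (hD : D ≤ C)
    (hinf : (D : Set G).Infinite) :
    ∃ F : Set G, F.Finite ∧ ∀ c ∈ C, ∃ x ∈ D, ∃ f ∈ F, c = x * f := by
  obtain ⟨z, hz, F, hF, hFC, hcov⟩ := hC
  obtain ⟨N, hN0, hN⟩ : ∃ N : ℤ, N ≠ 0 ∧ z ^ N ∈ D := by
    have hcov' : ∀ x : D, ∃ f : F, ∃ i : ℤ, (x : G) = z ^ i * f := fun x => by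
      obtain ⟨i, f, hf, h⟩ := hcov x (hD x.2)
      exact ⟨⟨f, hf⟩, i, h⟩
    choose f i hfi using hcov'
    have : Infinite D := hinf.to_subtype
    have : Finite F := hF
    obtain ⟨x, y, hxy, hf⟩ := Finite.exists_ne_map_eq_of_infinite f
    refine ⟨i x - i y, fun h0 => hxy ?_, ?_⟩
    · have : i x = i y := by omega
      apply Subtype.ext
      rw [hfi x, hfi y, hf, this]
    · have : z ^ (i x - i y) = (x : G) * (y : G)⁻¹ := by
        rw [hfi x, hfi y, hf, zpow_sub]; group
      rw [this]
      exact mul_mem x.2 (inv_mem y.2)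
  refine ⟨(fun r : ℤ => z ^ r) '' (Set.Icc 0 |N|) * F,
    ((Set.finite_Icc 0 |N|).image _).mul hF, fun c hc => ?_⟩
  obtain ⟨i, f, hf, rfl⟩ := hcov c hc
  refine ⟨z ^ (N * (i / N)), ?_, z ^ (i % N) * f, Set.mul_mem_mul ⟨i % N, ⟨?_, ?_⟩, rfl⟩ hf, ?_⟩
  · rw [zpow_mul]
    exact zpow_mem hN _
  · exact Int.emod_nonneg _ hN0
  · exact (Int.emod_lt_abs _ hN0).le
  · rw [← mul_assoc, ← zpow_add, Int.mul_ediv_add_emod]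

end VC

section Undistorted

variable {G : Type u} [Group G] {d : G → G → ℝ} {δ : ℝ}

theorem QCSet.translate (h : IsHypGroup d δ) {K : ℝ} {S T : Set G} (hS : QCSet d K S) (g : G)
    (hT : ∀ y, y ∈ T ↔ g⁻¹ * y ∈ S) : QCSet d K T := by
  intro p hp q hq w
  obtain ⟨s, hs, h1⟩ := hS _ ((hT p).1 hp) _ ((hT q).1 hq) (g⁻¹ * w)
  refine ⟨g * s, (hT _).2 (by simpa using hs), ?_⟩
  rw [h.left, h.left, h.left] at h1
  have := h.left g⁻¹ w (g * s)
  rw [inv_mul_cancel_left] at this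
  linarith

theorem IsNearest.translate (h : IsHypGroup d δ) {S T : Set G} (g : G)
    (hT : ∀ y, y ∈ T ↔ g⁻¹ * y ∈ S) {x p : G} (hp : IsNearest d S x p) :
    IsNearest d T (g * x) (g * p) := by
  refine ⟨(hT _).2 (by simpa using hp.1), fun q hq => ?_⟩
  have h1 := hp.2 _ ((hT q).1 hq)
  have := h.left g x (g⁻¹ * q)
  rw [mul_inv_cancel_left] at this
  rw [h.left]
  linarith

/-- The image of an undistorted homomorphism is quasiconvex. -/
theorem IsHypGroup.exists_qcSet_range (h : IsHypGroup d δ) {P : Type u} [Group P] (f : P →* G)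
    {Y : Set P} (hY : IsSymmGen Y) {c : ℝ} (hc : 0 < c)
    (hlen : ∀ p : P, (wordLength Y p : ℝ) ≤ c * d 1 (f p) + c) :
    ∃ K, QCSet d K (Set.range f) := by
  obtain ⟨M, hM0, hM⟩ := h.finite_bddAbove (hY.1.image f)
  obtain ⟨K, hK⟩ := h.exists_qcSet_of_chainProp hc.le hM0
  refine ⟨K, hK _ ?_⟩
  rintro _ ⟨p, rfl⟩ _ ⟨q, rfl⟩
  obtain ⟨l, h1, h2, h3⟩ := hY.exists_word (p⁻¹ * q)
  refine ⟨l.length, ?_, fun i => f (p * (l.take i).prod), by simp, ?_,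
    fun i _ => ⟨_, rfl⟩, fun i hi => ?_⟩
  · rw [h3, h.left_one, ← map_inv, ← map_mul]
    exact hlen _
  · simp [h2]
  · simp only [List.prod_take_succ l i hi, ← mul_assoc, map_mul, h.right]
    exact hM _ ⟨_, h1 _ (List.getElem_mem hi), rfl⟩

/-- A coarse Lipschitz retraction onto a finitely generated subgroup shows it is undistorted. -/
theorem IsHypGroup.wordLength_le_of_retraction (h : IsHypGroup d δ) {X : Set G} (hX : IsSymmGen X)
    {A : Bool → Subgroup G} (hgen : A true ⊔ A false = ⊤) {P : Subgroup G} (r : G → G)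
    (hrP : ∀ g, r g ∈ P) {K : ℝ} (hK : ∀ p ∈ P, d (r p) p ≤ K)
    (hLip : ∀ s, ∀ x ∈ A s, ∃ Kx, ∀ g, d (r g) (r (g * x)) ≤ Kx) {Y : Set P} (hY : IsSymmGen Y) :
    ∃ c : ℝ, 0 < c ∧ ∀ p : P, (wordLength Y p : ℝ) ≤ c * wordLength X (p : G) + c := by
  let T : Subgroup G :=
    { carrier := {x | ∃ Kx, ∀ g, d (r g) (r (g * x)) ≤ Kx}
      one_mem' := ⟨0, fun g => by rw [mul_one, h.self]⟩
      mul_mem' := by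
        rintro x y ⟨a, ha⟩ ⟨b, hb⟩
        refine ⟨a + b, fun g => ?_⟩
        have h1 := ha g
        have h2 := hb (g * x)
        have := h.tri (r g) (r (g * x)) (r (g * (x * y)))
        rw [mul_assoc] at h2
        linarith
      inv_mem' := by
        rintro x ⟨a, ha⟩
        refine ⟨a, fun g => ?_⟩
        have h1 := ha (g * x⁻¹)
        rw [inv_mul_cancel_right, h.comm] at h1
        exact h1 }
  have hT : T = ⊤ := by
    rw [eq_top_iff, ← hgen]
    exact sup_le (fun x hx => hLip true x hx) (fun x hx => hLip false x hx)
  have hall : ∀ x, ∃ Kx, ∀ g, d (r g) (r (g * x)) ≤ Kx := fun x => by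
    have : x ∈ T := hT ▸ Subgroup.mem_top x
    exact this
  choose κ hκ using hall
  obtain ⟨K₁, hK₁⟩ := (hX.1.image κ).bddAbove
  set R := max K₁ K
  have hfin : {p : P | d 1 (p : G) ≤ R}.Finite :=
    Set.Finite.preimage Subtype.val_injective.injOn (h.proper R)
  obtain ⟨N, hN⟩ := (hfin.image (wordLength Y)).bddAbove
  replace hN : ∀ p : P, d 1 (p : G) ≤ R → wordLength Y p ≤ N := fun p hp => hN ⟨p, hp, rfl⟩
  let r' : G → P := fun g => ⟨r g, hrP g⟩
  have hpath : ∀ l : List G, (∀ x ∈ l, x ∈ X) → ∀ g,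
      wordLength Y ((r' g)⁻¹ * r' (g * l.prod)) ≤ N * l.length := by
    intro l
    induction l with
    | nil => intro _ g; simp [wordLength_one]
    | cons a l ih =>
      intro hl g
      have h1 := ih (fun x hx => hl x (by simp [hx])) (g * a)
      have h2 : wordLength Y ((r' g)⁻¹ * r' (g * a)) ≤ N := by
        apply hN
        have : d 1 (((r' g)⁻¹ * r' (g * a) : P) : G) = d (r g) (r (g * a)) := by
          rw [h.left_one (r g)]; rfl
        rw [this]
        exact ((hκ a g).trans (hK₁ ⟨a, hl a (by simp), rfl⟩)).trans (le_max_left _ _)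
      have h3 := hY.wordLength_mul_le ((r' g)⁻¹ * r' (g * a))
        ((r' (g * a))⁻¹ * r' (g * a * l.prod))
      rw [mul_assoc, mul_inv_cancel_left, mul_assoc g] at h3
      rw [List.prod_cons, List.length_cons, mul_add, mul_one]
      rw [mul_assoc g] at h1
      omega
  refine ⟨2 * N + 1, by positivity, fun p => ?_⟩
  obtain ⟨l, h1, h2, h3⟩ := hX.exists_word (p : G)
  have e1 := hpath l h1 1
  rw [one_mul, h2, h3] at e1
  have e2 : wordLength Y (r' 1) ≤ N := by
    apply hN
    rw [h.comm]
    exact (hK 1 (one_mem P)).trans (le_max_right _ _)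
  have e3 : wordLength Y ((r' p)⁻¹ * p) ≤ N := by
    apply hN
    have : d 1 (((r' p)⁻¹ * p : P) : G) = d (r p) p := by
      rw [h.left_one (r p)]; rfl
    rw [this]
    exact (hK p p.2).trans (le_max_right _ _)
  have e4 := hY.wordLength_mul_le (r' 1) ((r' 1)⁻¹ * r' p)
  have e5 := hY.wordLength_mul_le (r' p) ((r' p)⁻¹ * p)
  rw [mul_inv_cancel_left] at e4 e5
  have e6 : wordLength Y p ≤ N * wordLength X (p : G) + 2 * N := by omega
  have e7 : (wordLength Y p : ℝ) ≤ N * wordLength X (p : G) + 2 * N := by exact_mod_cast e6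
  have : (0 : ℝ) ≤ (N + 1) * wordLength X (p : G) := by positivity
  linarith

end Undistorted

namespace BassSerre

variable {G : Type u} [Group G] {A : Bool → Subgroup G} {C : Subgroup G}

open Classical in
/-- Extend functions on a subtree `E` to the whole tree, by propagating along stars. -/
noncomputable def extend (T : BassSerre A C) (E : Set G) {β : Type*} (φ : G → β)
    (ψ : Bool → G → β) (g : G) : β :=
  if g ∈ E then φ g
  else if h : ∃ s, g⁻¹ * T.gate s g ∉ C then
    if T.gate h.choose g ∈ E then ψ h.choose g else extend T E φ ψ (T.gate h.choose g)
  else φ g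
termination_by T.depth g
decreasing_by exact T.depth_gate _ _ h.choose_spec

theorem extend_of_mem (T : BassSerre A C) {E : Set G} {β : Type*} {φ : G → β}
    {ψ : Bool → G → β} {g : G} (hg : g ∈ E) : T.extend E φ ψ g = φ g := by
  rw [extend, if_pos hg]

theorem extend_of_gate_mem (T : BassSerre A C) {E : Set G} {β : Type*} {φ : G → β}
    {ψ : Bool → G → β} {g : G} {s : Bool} (hg : g ∉ E) (hs : g⁻¹ * T.gate s g ∉ C)
    (hE : T.gate s g ∈ E) : T.extend E φ ψ g = ψ s g := by
  have h : ∃ s, g⁻¹ * T.gate s g ∉ C := ⟨s, hs⟩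
  have he : h.choose = s := T.side_unique _ _ _ h.choose_spec hs
  rw [extend, if_neg hg, dif_pos h, he, if_pos hE]

theorem extend_of_gate_notMem (T : BassSerre A C) {E : Set G} {β : Type*} {φ : G → β}
    {ψ : Bool → G → β} {g : G} {s : Bool} (hg : g ∉ E) (hs : g⁻¹ * T.gate s g ∉ C)
    (hE : T.gate s g ∉ E) : T.extend E φ ψ g = T.extend E φ ψ (T.gate s g) := by
  have h : ∃ s, g⁻¹ * T.gate s g ∉ C := ⟨s, hs⟩
  have he : h.choose = s := T.side_unique _ _ _ h.choose_spec hs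
  rw [extend, if_neg hg, dif_pos h, he, if_neg hE]

theorem gate_gate_mem (T : BassSerre A C) (s : Bool) (g : G) : (T.gate s g)⁻¹ * g ∈ A s := by
  simpa using inv_mem (T.gate_mem s g)

theorem exists_extension (T : BassSerre A C) (hCA : ∀ s, C ≤ A s) {E : Set G}
    (hCE : ∀ c ∈ C, c ∈ E) (hEC : ∀ g ∈ E, ∀ c ∈ C, g * c ∈ E)
    (hgate : ∀ g ∈ E, ∀ s, g⁻¹ * T.gate s g ∉ C → T.gate s g ∈ E) {β : Type*} (φ : G → β)
    (ψ : Bool → G → β) (hψ : ∀ s g, ∀ a ∈ A s, ψ s (g * a) = ψ s g) :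
    ∃ b : G → β, (∀ g ∈ E, b g = φ g) ∧
      (∀ s g, T.gate s g ∉ E → ∀ a ∈ A s, b (g * a) = b g) ∧
      (∀ s g, T.gate s g ∈ E → g ∉ E → b g = ψ s g) ∧
      ∀ p : β → Prop, (∀ u ∈ E, p (φ u)) → (∀ u ∈ E, ∀ s, p (ψ s u)) → ∀ g, p (b g) := by
  have hEC' : ∀ g, ∀ c ∈ C, g * c ∈ E → g ∈ E := fun g c hc h => by
    simpa using hEC _ h _ (inv_mem hc)
  have hnon : ∀ s g, T.gate s g ∈ E → g ∉ E → g⁻¹ * T.gate s g ∉ C := by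
    intro s g h1 h2 h3
    exact h2 (hEC' _ _ h3 (by rwa [mul_inv_cancel_left]))
  have hinv : ∀ g ∉ E, ∀ c ∈ C, T.extend E φ ψ (g * c) = T.extend E φ ψ g := by
    intro g hg c hc
    obtain ⟨s, hs⟩ := T.exists_side g (fun h => hg (hCE g h))
    have h1 := T.gate_mul s g c (hCA s hc)
    have hg' : g * c ∉ E := fun h => hg (hEC' _ _ hc h)
    have hs' : (g * c)⁻¹ * T.gate s (g * c) ∉ C := by
      rw [h1, mul_inv_rev, mul_assoc]
      exact fun h => hs (by simpa using mul_mem hc h)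
    by_cases hE : T.gate s g ∈ E
    · rw [T.extend_of_gate_mem hg hs hE, T.extend_of_gate_mem hg' hs' (h1 ▸ hE), hψ s g c (hCA s hc)]
    · rw [T.extend_of_gate_notMem hg hs hE, T.extend_of_gate_notMem hg' hs' (by rwa [h1]), h1]
  refine ⟨T.extend E φ ψ, fun g hg => T.extend_of_mem hg, ?_, ?_, ?_⟩
  · intro s g hg
    have key : ∀ y, T.gate s y = T.gate s g → T.extend E φ ψ y = T.extend E φ ψ (T.gate s g) := by
      intro y hy
      have hyE : y ∉ E := by
        intro hyE
        by_cases h1 : y⁻¹ * T.gate s y ∈ C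
        · exact hg (by simpa [hy] using hEC y hyE _ h1)
        · exact hg (hy ▸ hgate y hyE s h1)
      by_cases h1 : y⁻¹ * T.gate s y ∈ C
      · have := hinv y hyE _ h1
        rw [mul_inv_cancel_left, hy] at this
        exact this.symm
      · rw [T.extend_of_gate_notMem hyE h1 (by rwa [hy]), hy]
    intro a ha
    rw [key _ (T.gate_mul s g a ha), key g rfl]
  · intro s g h1 h2
    exact T.extend_of_gate_mem h2 (hnon s g h1 h2) h1
  · intro p h1 h2 g
    induction hn : T.depth g using Nat.strong_induction_on generalizing g with
    | _ n ih =>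
      by_cases hg : g ∈ E
      · rw [T.extend_of_mem hg]
        exact h1 g hg
      · obtain ⟨s, hs⟩ := T.exists_side g (fun h => hg (hCE g h))
        by_cases hE : T.gate s g ∈ E
        · rw [T.extend_of_gate_mem hg hs hE]
          have := hψ s g _ (T.gate_mem s g)
          rw [mul_inv_cancel_left] at this
          rw [← this]
          exact h2 _ hE s
        · rw [T.extend_of_gate_notMem hg hs hE]
          exact ih _ (hn ▸ T.depth_gate s g hs) _ rfl

theorem gate_eq_one_of_mem (T : BassSerre A C) {s : Bool} {g : G} (hg : g ∈ A s) :
    T.gate s g = 1 := by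
  have := T.gate_mul s 1 g hg
  rwa [one_mul, T.gate_one] at this

theorem gate_mem_of_ne (T : BassSerre A C) (hCA : ∀ s, C ≤ A s) {s t : Bool} (hst : t ≠ s) {g : G}
    (hg : g ∈ A s) : g⁻¹ * T.gate t g ∈ C := by
  by_contra h
  by_cases hgC : g ∈ C
  · rw [T.gate_eq_one_of_mem (hCA t hgC), mul_one] at h
    exact h (inv_mem hgC)
  · refine hst (T.side_unique t s g h ?_)
    rw [T.gate_eq_one_of_mem hg, mul_one]
    exact fun h => hgC (by simpa using inv_mem h)

/-- The first edge, at the vertex `A s`, of a path from that vertex to a given edge. -/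
theorem exists_firstEdge (T : BassSerre A C) (hCA : ∀ s, C ≤ A s) (s : Bool) :
    ∃ e : G → G ⧸ C, (∀ a ∈ A s, e a = a) ∧ (∀ g, ∃ a ∈ A s, e g = a) ∧
      ∀ t g, ∀ x ∈ A t, e (g * x) = e g ∨ t = s ∧ g ∈ A s := by
  have hcl : ∀ g ∈ A s, ∀ t, g⁻¹ * T.gate t g ∉ C → T.gate t g ∈ A s := by
    intro g hg t ht
    by_cases hts : t = s
    · rw [hts, T.gate_eq_one_of_mem hg]
      exact one_mem _
    · exact absurd (T.gate_mem_of_ne hCA hts hg) ht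
  obtain ⟨e, h1, h2, h3, h4⟩ := T.exists_extension hCA (E := A s) (fun c hc => hCA s hc)
    (fun g hg c hc => mul_mem hg (hCA s hc)) hcl (fun g => (g : G ⧸ C))
    (fun t g => (T.gate t g : G ⧸ C)) (fun t g a ha => by rw [T.gate_mul t g a ha])
  refine ⟨e, h1, ?_, ?_⟩
  · refine h4 (fun q => ∃ a ∈ A s, q = (a : G ⧸ C)) ?_ ?_
    · exact fun u hu => ⟨u, hu, rfl⟩
    · intro u hu t
      refine ⟨T.gate t u, ?_, rfl⟩
      by_cases hut : u⁻¹ * T.gate t u ∈ C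
      · simpa using mul_mem hu (hCA s hut)
      · exact hcl u hu t hut
  · intro t g x hx
    by_cases hE : T.gate t g ∈ A s
    · by_cases hts : t = s
      · subst hts
        exact Or.inr ⟨rfl, by simpa using mul_mem hE (T.gate_gate_mem t g)⟩
      · left
        have key : ∀ y, T.gate t y = T.gate t g → e y = T.gate t g := by
          intro y hy
          by_cases hyE : y ∈ A s
          · rw [h1 y hyE, QuotientGroup.eq, ← hy]
            exact T.gate_mem_of_ne hCA hts hyE
          · rw [h3 t y (by rwa [hy]) hyE, hy]
        rw [key g rfl, key _ (T.gate_mul t g x hx)]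
    · exact Or.inl (h2 t g hE x hx)

/-- Vertex groups are undistorted. -/
theorem undistorted (T : BassSerre A C) (hCA : ∀ s, C ≤ A s) (hgen : A true ⊔ A false = ⊤)
    {d : G → G → ℝ} {δ : ℝ} (h : IsHypGroup d δ) {X : Set G} (hX : IsSymmGen X) (hC : IsVC C)
    (s : Bool) {Y : Set (A s)} (hY : IsSymmGen Y) :
    ∃ c : ℝ, 0 < c ∧ ∀ p : A s, (wordLength Y p : ℝ) ≤ c * wordLength X (p : G) + c := by
  obtain ⟨K, hK⟩ := hC.exists_qcSet h
  obtain ⟨e, h1, h2, h3⟩ := T.exists_firstEdge hCA s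
  have hqc : ∀ g, QCSet d K {y : G | (y : G ⧸ C) = e g} := by
    intro g
    obtain ⟨a, ha, hea⟩ := h2 g
    refine hK.translate h a fun y => ?_
    rw [hea, Set.mem_ofPred_eq, eq_comm, QuotientGroup.eq]
    rfl
  have hne : ∀ g, {y : G | (y : G ⧸ C) = e g}.Nonempty := by
    intro g
    obtain ⟨a, ha, hea⟩ := h2 g
    exact ⟨a, hea.symm⟩
  choose r hr using fun g => h.exists_isNearest (hne g) g
  have hself : ∀ a ∈ A s, d (r a) a ≤ 0 := by
    intro a ha
    have := (hr a).2 a (h1 a ha).symm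
    rw [h.self, h.comm] at this
    exact this
  refine h.wordLength_le_of_retraction hX hgen r ?_ hself ?_ hY
  · intro g
    obtain ⟨a, ha, hea⟩ := h2 g
    have h5 : (r g : G ⧸ C) = e g := (hr g).1
    rw [hea, eq_comm, QuotientGroup.eq] at h5
    simpa using mul_mem ha (hCA s h5)
  · intro t x hx
    refine ⟨d 1 x + (4 * (K + δ + 1) + 2 * δ), fun g => ?_⟩
    have hgx := h.right g x
    rcases h3 t g x hx with h5 | ⟨rfl, hg⟩
    · have h6 := hr (g * x)
      rw [h5] at h6
      have := h.dist_le_of_isNearest (hqc g) (hr g) h6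
      linarith
    · have e1 := hself g hg
      have e2 := hself (g * x) (mul_mem hg hx)
      have e3 := h.tri (r g) g (r (g * x))
      have e4 := h.tri g (g * x) (r (g * x))
      have e5 := h.comm (g * x) (r (g * x))
      have := h.qc_const_nonneg (hqc g) (hr g).1
      have := h.delta_nonneg
      linarith

end BassSerre

section Conj

variable {G : Type u} [Group G] {C : Subgroup G}

theorem mem_map_conj_iff {g x : G} :
    x ∈ C.map (MulAut.conj g).toMonoidHom ↔ g⁻¹ * x * g ∈ C := by
  constructor
  · rintro ⟨c, hc, rfl⟩
    have : g⁻¹ * (g * c * g⁻¹) * g = c := by group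
    simpa [this] using hc
  · intro h
    exact ⟨_, h, by simp [mul_assoc]⟩

theorem IsVC.conj (hC : IsVC C) (g : G) : IsVC (C.map (MulAut.conj g).toMonoidHom) := by
  obtain ⟨z, hz, F, hF, hFC, hcov⟩ := hC
  refine ⟨g * z * g⁻¹, ⟨z, hz, rfl⟩, (fun f => g * f * g⁻¹) '' F, hF.image _, ?_, ?_⟩
  · rintro _ ⟨f, hf, rfl⟩
    exact ⟨f, hFC hf, rfl⟩
  · rintro _ ⟨c, hc, rfl⟩
    obtain ⟨i, f, hf, rfl⟩ := hcov c hc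
    refine ⟨i, _, ⟨f, hf, rfl⟩, ?_⟩
    rw [conj_zpow]
    simp [mul_assoc]

end Conj

namespace BassSerre

variable {G : Type u} [Group G] {A : Bool → Subgroup G} {C : Subgroup G}

/-- Every finite set of edges is contained in a finite subtree containing the root. -/
theorem exists_finite_gate_closed (T : BassSerre A C) (hCA : ∀ s, C ≤ A s) {F : Set G}
    (hF : F.Finite) :
    ∃ M : Set G, M.Finite ∧ F ⊆ M ∧ ∀ m ∈ M, ∀ s, m⁻¹ * T.gate s m ∉ C → T.gate s m ∈ M := by
  have key : ∀ g, ∃ M : Set G, M.Finite ∧ g ∈ M ∧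
      ∀ m ∈ M, ∀ s, m⁻¹ * T.gate s m ∉ C → T.gate s m ∈ M := by
    intro g
    induction hn : T.depth g using Nat.strong_induction_on generalizing g with
    | _ n ih =>
      by_cases hg : g ∈ C
      · refine ⟨{g}, Set.finite_singleton g, rfl, ?_⟩
        rintro m rfl s hs
        rw [T.gate_eq_one_of_mem (hCA s hg), mul_one] at hs
        exact absurd (inv_mem hg) hs
      · obtain ⟨s, hs⟩ := T.exists_side g hg
        obtain ⟨M, hM, hgM, hcl⟩ := ih _ (hn ▸ T.depth_gate s g hs) _ rfl
        refine ⟨insert g M, hM.insert g, Set.mem_insert _ _, ?_⟩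
        rintro m (rfl | hm) t ht
        · rw [T.side_unique t s m ht hs]
          exact Set.mem_insert_of_mem _ hgM
        · exact Set.mem_insert_of_mem _ (hcl m hm t ht)
  choose M hM hgM hcl using key
  refine ⟨⋃ g ∈ F, M g, hF.biUnion fun g _ => hM g, fun g hg => ?_, ?_⟩
  · exact Set.mem_biUnion hg (hgM g)
  · intro m hm s hs
    simp only [Set.mem_iUnion] at hm ⊢
    obtain ⟨g, hg, hmg⟩ := hm
    exact ⟨g, hg, hcl g m hmg s hs⟩

/-- Intersections of a finitely generated subgroup with the vertex groups are finitely generated. -/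
theorem fg_inf (T : BassSerre A C) (hCA : ∀ s, C ≤ A s) (hC : IsVC C) {H : Subgroup G}
    (hH : H.FG) (s : Bool) : (H ⊓ A s).FG := by
  classical
  obtain ⟨S, hS, hSfin⟩ := Subgroup.fg_iff _ |>.1 hH
  obtain ⟨M, hMfin, hSM, hcl⟩ := T.exists_finite_gate_closed hCA
    ((hSfin.union hSfin.inv).insert 1)
  have h1M : (1 : G) ∈ M := hSM (Set.mem_insert _ _)
  obtain ⟨e, he1, -, he3⟩ := T.exists_firstEdge hCA s
  set L := H ⊓ A s with hL
  let V : G → Prop := fun m => ∃ k ∈ H, k * m ∈ A s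
  let k : G → G := fun m => if m = 1 then 1 else if h : V m then h.choose else 1
  have hk1 : k 1 = 1 := if_pos rfl
  have hkH : ∀ m, k m ∈ H := by
    intro m
    simp only [k]
    split_ifs with h1 h2
    · exact one_mem H
    · exact h2.choose_spec.1
    · exact one_mem H
  have hkA : ∀ m, V m → k m * m ∈ A s := by
    intro m hm
    by_cases h1 : m = 1
    · rw [h1, hk1, one_mul]
      exact one_mem _
    · simp only [k, if_neg h1, dif_pos hm]
      exact hm.choose_spec.2
  let τ : G × G → G := fun q =>
    if h : ∃ l ∈ L, (l * (k q.1 * q.1))⁻¹ * (k q.2 * q.2) ∈ C then h.choose else 1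
  have hτL : ∀ q, τ q ∈ L := by
    intro q
    simp only [τ]
    split_ifs with h
    · exact h.choose_spec.1
    · exact one_mem L
  have hDfg : ∀ m, (L ⊓ C.map (MulAut.conj (k m * m)).toMonoidHom).FG :=
    fun m => (hC.conj _).fg_of_le inf_le_right
  simp only [Subgroup.fg_iff] at hDfg
  choose B hB hBfin using hDfg
  let U : Set G := ((fun q : G × G => k q.1 * (k q.2)⁻¹) '' (M ×ˢ M) ∩ A s) ∪ τ '' (M ×ˢ M) ∪
    ⋃ m ∈ M, B m
  have hUfin : U.Finite := by
    refine Set.Finite.union (Set.Finite.union ?_ ?_) (hMfin.biUnion fun m _ => hBfin m)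
    · exact ((hMfin.prod hMfin).image _).inter_of_left _
    · exact (hMfin.prod hMfin).image _
  set P := Subgroup.closure U with hP
  have hkkP : ∀ m ∈ M, ∀ m' ∈ M, k m * (k m')⁻¹ ∈ A s → k m * (k m')⁻¹ ∈ P :=
    fun m hm m' hm' h => Subgroup.subset_closure (Or.inl (Or.inl ⟨⟨(m, m'), ⟨hm, hm'⟩, rfl⟩, h⟩))
  have hτP : ∀ m ∈ M, ∀ m' ∈ M, τ (m, m') ∈ P :=
    fun m hm m' hm' => Subgroup.subset_closure (Or.inl (Or.inr ⟨(m, m'), ⟨hm, hm'⟩, rfl⟩))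
  have hBP : ∀ m ∈ M, L ⊓ C.map (MulAut.conj (k m * m)).toMonoidHom ≤ P := by
    intro m hm
    rw [← hB m]
    exact Subgroup.closure_mono fun x hx => Or.inr (Set.mem_biUnion hm hx)
  have hPL : P ≤ L := by
    rw [hP, Subgroup.closure_le]
    rintro x ((⟨⟨q, -, rfl⟩, hx⟩ | ⟨q, -, rfl⟩) | hx)
    · exact Subgroup.mem_inf.2 ⟨mul_mem (hkH _) (inv_mem (hkH _)), hx⟩
    · exact hτL q
    · simp only [Set.mem_iUnion] at hx
      obtain ⟨m, -, hx⟩ := hx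
      have : x ∈ L ⊓ C.map (MulAut.conj (k m * m)).toMonoidHom :=
        hB m ▸ Subgroup.subset_closure hx
      exact this.1
  have hmemP : ∀ m ∈ M, ∀ m' ∈ M, ∀ l ∈ L, (l * (k m * m))⁻¹ * (k m' * m') ∈ C → l ∈ P := by
    intro m hm m' hm' l hl hlc
    have hex : ∃ l ∈ L, (l * (k m * m))⁻¹ * (k m' * m') ∈ C := ⟨l, hl, hlc⟩
    have hτ : (τ (m, m') * (k m * m))⁻¹ * (k m' * m') ∈ C := by
      simp only [τ, dif_pos hex]
      exact hex.choose_spec.2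
    have h1 : (τ (m, m'))⁻¹ * l ∈ P := by
      refine hBP m hm (Subgroup.mem_inf.2 ⟨mul_mem (inv_mem (hτL _)) hl, ?_⟩)
      refine mem_map_conj_iff.2 ?_
      have := mul_mem hτ (inv_mem hlc)
      convert this using 1
      group
    simpa using mul_mem (hτP m hm m' hm') h1
  let Q : G → Prop := fun g => ∃ p ∈ P, ∃ m ∈ M, e g = (p * (k m * m) : G)
  have heC : ∀ g, ∀ c ∈ C, e (g * c) = e g := by
    intro g c hc
    rcases he3 (!s) g c (hCA _ hc) with h | ⟨h, -⟩
    · exact h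
    · simp at h
  have hstep : ∀ h ∈ H, Q h → ∀ m ∈ M, Q (h * m) := by
    intro h hh hQ m
    induction hn : T.depth m using Nat.strong_induction_on generalizing m with
    | _ n ih =>
      intro hm
      by_cases hmC : m ∈ C
      · obtain ⟨p, hp, m', hm', h1⟩ := hQ
        exact ⟨p, hp, m', hm', by rw [heC h m hmC, h1]⟩
      obtain ⟨t, ht⟩ := T.exists_side m hmC
      set m' := T.gate t m with hm'
      have hm'M : m' ∈ M := hcl m hm t ht
      have hx : m'⁻¹ * m ∈ A t := T.gate_gate_mem t m
      obtain ⟨p, hp, m₀, hm₀, h1⟩ := ih _ (hn ▸ T.depth_gate t m ht) m' rfl hm'M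
      have h2 : h * m = h * m' * (m'⁻¹ * m) := by group
      rcases he3 t (h * m') _ hx with h3 | ⟨rfl, h3⟩
      · exact ⟨p, hp, m₀, hm₀, by rw [h2, h3, h1]⟩
      have h4 : h * m ∈ A t := by
        rw [h2]
        exact mul_mem h3 hx
      have hVm : V m := ⟨h, hh, h4⟩
      have hVm' : V m' := ⟨h, hh, h3⟩
      refine ⟨h * (k m)⁻¹, ?_, m, hm, by rw [he1 _ h4]; congr 1; group⟩
      have h5 : h * (k m)⁻¹ ∈ L := by
        refine Subgroup.mem_inf.2 ⟨mul_mem hh (inv_mem (hkH m)), ?_⟩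
        have := mul_mem h4 (inv_mem (hkA m hVm))
        convert this using 1
        group
      have h6 : k m * (k m')⁻¹ ∈ A t := by
        have := mul_mem (mul_mem (hkA m hVm) (inv_mem hx)) (inv_mem (hkA m' hVm'))
        convert this using 1
        group
      have h7 := hkkP m hm m' hm'M h6
      have h8 : p⁻¹ * (h * (k m)⁻¹ * (k m * (k m')⁻¹)) ∈ P := by
        apply hmemP m' hm'M m₀ hm₀
        · exact mul_mem (inv_mem (hPL hp)) (mul_mem h5 (hPL h7))
        · rw [he1 _ h3, QuotientGroup.eq] at h1
          convert h1 using 1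
          group
      have := mul_mem (mul_mem hp h8) (inv_mem h7)
      convert this using 1
      group
  have hQH : ∀ h ∈ H, Q h := by
    intro h hh
    rw [← hS] at hh
    have hQ1 : Q 1 := ⟨1, one_mem P, 1, h1M, by rw [he1 1 (one_mem _), hk1]; simp⟩
    induction hh using Subgroup.closure_induction_right with
    | one => exact hQ1
    | mul_right x hx y hy ih =>
      exact hstep x (hS ▸ hx) ih y (hSM (Or.inr (Or.inl hy)))
    | mul_inv_cancel x hx y hy ih =>
      exact hstep x (hS ▸ hx) ih y⁻¹ (hSM (Or.inr (Or.inr (Set.inv_mem_inv.2 hy))))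
  rw [Subgroup.fg_iff]
  refine ⟨U, le_antisymm hPL fun l hl => ?_, hUfin⟩
  obtain ⟨p, hp, m, hm, h1⟩ := hQH l hl.1
  rw [he1 l hl.2, QuotientGroup.eq] at h1
  have h2 : p⁻¹ * l ∈ P := by
    apply hmemP 1 h1M m hm _ (mul_mem (inv_mem (hPL hp)) hl)
    rw [hk1]
    convert h1 using 1
    group
  simpa using mul_mem hp h2

end BassSerre

/-- The set `H M C`. -/
def edgeSet {G : Type u} [Group G] (H : Subgroup G) (M : Set G) (C : Subgroup G) : Set G :=
  {g | ∃ h ∈ H, ∃ m ∈ M, ∃ c ∈ C, g = h * m * c}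

section EdgeSet

variable {G : Type u} [Group G] {H C : Subgroup G} {M : Set G}

theorem edgeSet_mul_mem {g c : G} (hg : g ∈ edgeSet H M C) (hc : c ∈ C) :
    g * c ∈ edgeSet H M C := by
  obtain ⟨k, hk, m, hm, c', hc', rfl⟩ := hg
  exact ⟨k, hk, m, hm, c' * c, mul_mem hc' hc, by simp only [mul_assoc]⟩

theorem mem_edgeSet {h m : G} (hh : h ∈ H) (hm : m ∈ M) : h * m ∈ edgeSet H M C :=
  ⟨h, hh, m, hm, 1, one_mem C, by simp⟩

end EdgeSet

namespace BassSerre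

variable {G : Type u} [Group G] {A : Bool → Subgroup G} {C : Subgroup G}

/-- All edges on the path from the root to `g` belong to `E`. -/
inductive PathIn (T : BassSerre A C) (E : Set G) : G → Prop
  | intro (g : G) (hg : g ∈ E)
      (hs : ∀ s, g⁻¹ * T.gate s g ∉ C → PathIn T E (T.gate s g)) : PathIn T E g

theorem PathIn.mem {T : BassSerre A C} {E : Set G} {g : G} (h : T.PathIn E g) : g ∈ E := by
  cases h with | intro _ hg _ => exact hg

theorem PathIn.gate {T : BassSerre A C} {E : Set G} {g : G} (h : T.PathIn E g) {s : Bool}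
    (hs : g⁻¹ * T.gate s g ∉ C) : T.PathIn E (T.gate s g) := by
  cases h with | intro _ _ h => exact h s hs

theorem PathIn.mul_mem {T : BassSerre A C} (hCA : ∀ s, C ≤ A s) {E : Set G}
    (hEC : ∀ g ∈ E, ∀ c ∈ C, g * c ∈ E) {g : G} (h : T.PathIn E g) {c : G} (hc : c ∈ C) :
    T.PathIn E (g * c) := by
  refine PathIn.intro _ (hEC g h.mem c hc) fun s hs => ?_
  rw [T.gate_mul s g c (hCA s hc)] at hs ⊢
  refine h.gate fun h1 => hs ?_
  rw [mul_inv_rev, mul_assoc]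
  exact C.mul_mem (C.inv_mem hc) h1

theorem PathIn.of_star {T : BassSerre A C} (hCA : ∀ s, C ≤ A s) {E : Set G}
    (hEC : ∀ g ∈ E, ∀ c ∈ C, g * c ∈ E) {g a : G} {s : Bool} (h : T.PathIn E g) (ha : a ∈ A s)
    (hga : g * a ∈ E) : T.PathIn E (g * a) := by
  have hv : T.PathIn E (T.gate s g) := by
    by_cases h1 : g⁻¹ * T.gate s g ∈ C
    · simpa using h.mul_mem hCA hEC h1
    · exact h.gate h1
  have h2 := T.gate_mul s g a ha
  by_cases h1 : (g * a)⁻¹ * T.gate s (g * a) ∈ C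
  · rw [h2] at h1
    simpa using hv.mul_mem hCA hEC (C.inv_mem h1)
  · refine PathIn.intro _ hga fun t ht => ?_
    rw [T.side_unique t s _ ht h1, h2]
    exact hv

/-- A finitely generated subgroup preserves a cocompact subtree containing the root. -/
theorem exists_edgeSet_gate_closed (T : BassSerre A C) (hCA : ∀ s, C ≤ A s) {H : Subgroup G}
    (hH : H.FG) :
    ∃ M : Set G, M.Finite ∧ 1 ∈ M ∧ ∀ g ∈ edgeSet H M C, ∀ s, g⁻¹ * T.gate s g ∉ C →
      T.gate s g ∈ edgeSet H M C := by
  obtain ⟨S, hS, hSfin⟩ := Subgroup.fg_iff _ |>.1 hH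
  obtain ⟨M, hMfin, hSM, hcl⟩ := T.exists_finite_gate_closed hCA
    ((hSfin.union hSfin.inv).insert 1)
  have h1M : (1 : G) ∈ M := hSM (Set.mem_insert _ _)
  refine ⟨M, hMfin, h1M, ?_⟩
  have hEC : ∀ g ∈ edgeSet H M C, ∀ c ∈ C, g * c ∈ edgeSet H M C :=
    fun g hg c hc => edgeSet_mul_mem hg hc
  have hstep : ∀ h ∈ H, T.PathIn (edgeSet H M C) h → ∀ m ∈ M,
      T.PathIn (edgeSet H M C) (h * m) := by
    intro h hh hp m
    induction hn : T.depth m using Nat.strong_induction_on generalizing m with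
    | _ n ih =>
      intro hm
      by_cases hmC : m ∈ C
      · exact hp.mul_mem hCA hEC hmC
      obtain ⟨t, ht⟩ := T.exists_side m hmC
      have h1 := ih _ (hn ▸ T.depth_gate t m ht) _ rfl (hcl m hm t ht)
      have h2 : h * m = h * T.gate t m * ((T.gate t m)⁻¹ * m) := by group
      rw [h2]
      refine h1.of_star hCA hEC (T.gate_gate_mem t m) ?_
      rw [← h2]
      exact mem_edgeSet hh hm
  have hpath : ∀ h ∈ H, T.PathIn (edgeSet H M C) h := by
    intro h hh
    rw [← hS] at hh
    induction hh using Subgroup.closure_induction_right with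
    | one =>
      refine PathIn.intro _ (by simpa using mem_edgeSet (C := C) (one_mem H) h1M) fun s hs => ?_
      rw [T.gate_one, mul_one, inv_one] at hs
      exact absurd (one_mem C) hs
    | mul_right x hx y hy ih =>
      exact hstep x (hS ▸ hx) ih y (hSM (Or.inr (Or.inl hy)))
    | mul_inv_cancel x hx y hy ih =>
      exact hstep x (hS ▸ hx) ih y⁻¹ (hSM (Or.inr (Or.inr (Set.inv_mem_inv.2 hy))))
  rintro _ ⟨h, hh, m, hm, c, hc, rfl⟩ s hs
  exact (((hstep h hh (hpath h hh) m hm).mul_mem hCA hEC hc).gate hs).mem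

/-- Finitely generated subgroups of vertex groups with property (Q) are quasiconvex. -/
theorem exists_qcSet_of_le (T : BassSerre A C) (hCA : ∀ s, C ≤ A s) (hgen : A true ⊔ A false = ⊤)
    {d : G → G → ℝ} {δ : ℝ} (h : IsHypGroup d δ) {X : Set G} (hX : IsSymmGen X)
    (hdX : ∀ g, d 1 g = wordLength X g) (hC : IsVC C) {s : Bool} (hQ : HasPropertyQ (A s))
    {L : Subgroup G} (hL : L.FG) (hLA : L ≤ A s) : ∃ K, QCSet d K (L : Set G) := by
  have hfg : (L.subgroupOf (A s)).FG := by
    rw [← Group.fg_iff_subgroup_fg] at hL ⊢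
    exact Group.fg_of_surjective (f := (Subgroup.subgroupOfEquivOfLe hLA).symm.toMonoidHom)
      (Subgroup.subgroupOfEquivOfLe hLA).symm.surjective
  obtain ⟨Y, hY, X', hX', c, hc, hlen⟩ := hQ _ hfg
  obtain ⟨c', hc', hlen'⟩ := T.undistorted hCA hgen h hX hC s hX'
  obtain ⟨K, hK⟩ := h.exists_qcSet_range ((A s).subtype.comp (L.subgroupOf (A s)).subtype) hY
    (c := c * c' + c) (by positivity) (by
      intro p
      have h1 := hlen p
      have h2 := hlen' p
      simp only [MonoidHom.coe_comp, Subgroup.coe_subtype, Function.comp_apply, hdX]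
      have h3 := mul_le_mul_of_nonneg_left h2 hc.le
      have : 0 ≤ c * (wordLength X ((p : A s) : G) : ℝ) := by positivity
      linarith)
  refine ⟨K, ?_⟩
  convert hK using 1
  ext x
  constructor
  · intro hx
    exact ⟨⟨⟨x, hLA hx⟩, hx⟩, rfl⟩
  · rintro ⟨p, rfl⟩
    exact p.2

/-- A chosen representative in `M` for the `H`-orbit of the vertex `u A s`. -/
noncomputable def vertexRep (A : Bool → Subgroup G) (H : Subgroup G) (M : Set G) (s : Bool)
    (u : G) : G :=
  Classical.epsilon fun t => t ∈ M ∧ ∃ h ∈ H, (h * t)⁻¹ * u ∈ A s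

/-- The elements of `H` carrying the chosen representative to the vertex `u A s`. -/
def vertexOrbit (A : Bool → Subgroup G) (H : Subgroup G) (M : Set G) (s : Bool) (u : G) : Set G :=
  {h | h ∈ H ∧ (h * vertexRep A H M s u)⁻¹ * u ∈ A s}

section Orbit

variable {H : Subgroup G} {M : Set G} {s : Bool} {u : G}

theorem vertexRep_mul {a : G} (ha : a ∈ A s) :
    vertexRep A H M s (u * a) = vertexRep A H M s u := by
  unfold vertexRep
  simp only [← mul_assoc, (A s).mul_mem_cancel_right ha]

theorem vertexOrbit_mul {a : G} (ha : a ∈ A s) :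
    vertexOrbit A H M s (u * a) = vertexOrbit A H M s u := by
  unfold vertexOrbit
  simp only [vertexRep_mul ha, ← mul_assoc, (A s).mul_mem_cancel_right ha]

theorem vertexRep_left {k : G} (hk : k ∈ H) :
    vertexRep A H M s (k * u) = vertexRep A H M s u := by
  unfold vertexRep
  congr 1
  funext t
  refine propext (and_congr_right fun _ => ⟨?_, ?_⟩)
  · rintro ⟨h, hh, h1⟩
    refine ⟨k⁻¹ * h, mul_mem (inv_mem hk) hh, ?_⟩
    convert h1 using 1
    group
  · rintro ⟨h, hh, h1⟩
    refine ⟨k * h, mul_mem hk hh, ?_⟩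
    convert h1 using 1
    group

theorem mem_vertexOrbit_left {k : G} (hk : k ∈ H) (y : G) :
    y ∈ vertexOrbit A H M s (k * u) ↔ k⁻¹ * y ∈ vertexOrbit A H M s u := by
  change y ∈ H ∧ _ ↔ k⁻¹ * y ∈ H ∧ _
  rw [vertexRep_left hk, H.mul_mem_cancel_left (inv_mem hk)]
  have : (y * vertexRep A H M s u)⁻¹ * (k * u) = (k⁻¹ * y * vertexRep A H M s u)⁻¹ * u := by group
  rw [this]

theorem vertexRep_spec (hCA : ∀ s, C ≤ A s) (hu : u ∈ edgeSet H M C) :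
    vertexRep A H M s u ∈ M ∧ ∃ h ∈ H, (h * vertexRep A H M s u)⁻¹ * u ∈ A s := by
  have hex : ∃ t, t ∈ M ∧ ∃ h ∈ H, (h * t)⁻¹ * u ∈ A s := by
    obtain ⟨h, hh, m, hm, c, hc, rfl⟩ := hu
    exact ⟨m, hm, h, hh, by rw [inv_mul_cancel_left]; exact hCA s hc⟩
  exact Classical.epsilon_spec hex

theorem vertexOrbit_nonempty (hCA : ∀ s, C ≤ A s) (hu : u ∈ edgeSet H M C) :
    (vertexOrbit A H M s u).Nonempty := by
  obtain ⟨-, h, hh, h1⟩ := vertexRep_spec (s := s) hCA hu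
  exact ⟨h, hh, h1⟩

end Orbit

/-- The stabilizers `H ∩ t A s t⁻¹` are quasiconvex. -/
theorem exists_qcSet_stabilizer (T : BassSerre A C) (hCA : ∀ s, C ≤ A s)
    (hgen : A true ⊔ A false = ⊤) {d : G → G → ℝ} {δ : ℝ} (h : IsHypGroup d δ) {X : Set G}
    (hX : IsSymmGen X) (hdX : ∀ g, d 1 g = wordLength X g) (hC : IsVC C) {s : Bool}
    (hQ : HasPropertyQ (A s)) {H : Subgroup G} (hH : H.FG) (t : G) :
    ∃ K, QCSet d K {x | x ∈ H ∧ t⁻¹ * x * t ∈ A s} := by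
  have hH' : (H.map (MulAut.conj t⁻¹).toMonoidHom).FG := by
    obtain ⟨S, rfl⟩ := hH
    classical
    exact ⟨S.image _, by rw [Finset.coe_image, MonoidHom.map_closure]⟩
  obtain ⟨K, hK⟩ := T.exists_qcSet_of_le hCA hgen h hX hdX hC hQ
    (T.fg_inf hCA hC hH' s) inf_le_right
  have hK' := hK.translate h t (T := {y | t⁻¹ * y ∈ H.map (MulAut.conj t⁻¹).toMonoidHom ⊓ A s})
    (fun y => Iff.rfl)
  have hmem : ∀ x, x ∈ H ∧ t⁻¹ * x * t ∈ A s ↔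
      t⁻¹ * (x * t) ∈ H.map (MulAut.conj t⁻¹).toMonoidHom ⊓ A s := by
    intro x
    rw [Subgroup.mem_inf, mem_map_conj_iff, mul_assoc t⁻¹]
    have : t⁻¹⁻¹ * (t⁻¹ * (x * t)) * t⁻¹ = x := by group
    rw [this]
  refine ⟨K + 3 * d 1 t, h.qcSet_of_hausdorff hK' ?_ ?_⟩
  · intro x hx
    exact ⟨x * t, (hmem x).1 hx, (h.right x t).le⟩
  · intro y hy
    refine ⟨y * t⁻¹, (hmem _).2 (by simpa using hy), ?_⟩
    rw [h.right, h.inv]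

theorem exists_qcSet_vertexOrbit (T : BassSerre A C) (hCA : ∀ s, C ≤ A s)
    (hgen : A true ⊔ A false = ⊤) {d : G → G → ℝ} {δ : ℝ} (h : IsHypGroup d δ) {X : Set G}
    (hX : IsSymmGen X) (hdX : ∀ g, d 1 g = wordLength X g) (hC : IsVC C)
    (hQ : ∀ s, HasPropertyQ (A s)) {H : Subgroup G} (hH : H.FG) {M : Set G} (hM : M.Finite) :
    ∃ K, ∀ s, ∀ u ∈ edgeSet H M C, QCSet d K (vertexOrbit A H M s u) := by
  choose κ hκ using fun s t => T.exists_qcSet_stabilizer hCA hgen h hX hdX hC (hQ s) hH t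
  obtain ⟨K, hK⟩ := ((Set.finite_univ.prod hM).image fun q : Bool × G => κ q.1 q.2).bddAbove
  refine ⟨K, fun s u hu => ?_⟩
  obtain ⟨htM, k, hk, hku⟩ := vertexRep_spec (s := s) hCA hu
  refine QCSet.mono ?_ (hK ⟨(s, vertexRep A H M s u), ⟨Set.mem_univ _, htM⟩, rfl⟩)
  refine (hκ s (vertexRep A H M s u)).translate h k fun y => ?_
  change y ∈ H ∧ _ ↔ k⁻¹ * y ∈ H ∧ _
  rw [H.mul_mem_cancel_left (inv_mem hk)]
  refine and_congr_right fun _ => ?_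
  generalize vertexRep A H M s u = t at *
  constructor
  · intro h1
    have := mul_mem hku (inv_mem h1)
    convert this using 1
    group
  · intro h1
    have := mul_mem (inv_mem h1) hku
    convert this using 1
    group

/-- Let `f C` be an edge and let `S ⊆ H` be a quasiconvex set invariant under the stabilizer of
this edge in `H`. Either all points of `f C` are close to `S`, or the projection of `f C` to `S`
is finite; in both cases this only depends on the stabilizer. -/
theorem projection_bounded {d : G → G → ℝ} {δ : ℝ} (h : IsHypGroup d δ) (hC : IsVC C)
    {H : Subgroup G} {f : G} {K : ℝ} {S₁ S₂ : Set G} (hS₁ : QCSet d K S₁) (hS₂ : QCSet d K S₂)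
    (hne₁ : S₁.Nonempty) (hne₂ : S₂.Nonempty) (hH₁ : S₁ ⊆ H) (hH₂ : S₂ ⊆ H)
    (hinv₁ : ∀ x ∈ H, f⁻¹ * x * f ∈ C → ∀ y ∈ S₁, x * y ∈ S₁)
    (hinv₂ : ∀ x ∈ H, f⁻¹ * x * f ∈ C → ∀ y ∈ S₂, x * y ∈ S₂) :
    ∃ R, ∀ c ∈ C, ∀ p q, IsNearest d S₁ (f * c) p → IsNearest d S₂ (f * c) q → d p q ≤ R := by
  set D := H ⊓ C.map (MulAut.conj f).toMonoidHom with hD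
  have hDmem : ∀ x, x ∈ D ↔ x ∈ H ∧ f⁻¹ * x * f ∈ C := fun x => by
    rw [hD, Subgroup.mem_inf, mem_map_conj_iff]
  by_cases hDfin : (D : Set G).Finite
  · have key : ∀ S : Set G, QCSet d K S → S ⊆ H →
        ∃ R, ∀ c ∈ C, ∀ p, IsNearest d S (f * c) p → d 1 p ≤ R := by
      intro S hS hSH
      suffices hfin : {p | ∃ c ∈ C, IsNearest d S (f * c) p}.Finite by
        obtain ⟨R, -, hR⟩ := h.finite_bddAbove hfin
        exact ⟨R, fun c hc p hp => hR p ⟨c, hc, hp⟩⟩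
      by_contra hinf
      obtain ⟨KC, hKC⟩ := hC.exists_qcSet h
      have hS' : QCSet d (max K KC) {y | f⁻¹ * y ∈ C} :=
        (hKC.translate h f fun y => Iff.rfl).mono (le_max_right _ _)
      have hS'' := hS.mono (le_max_left K KC)
      set κ := max K KC
      have hclose : ∀ p : {p | ∃ c ∈ C, IsNearest d S (f * c) p},
          ∃ u : {g | d 1 g ≤ 2 * (κ + δ + 1) + δ + κ}, ∃ c ∈ C, (p : G) = f * c * u := by
        rintro ⟨p, c, hc, hp⟩
        obtain ⟨p', ⟨c', hc', hp'⟩, hfar⟩ : ∃ p', (∃ c ∈ C, IsNearest d S (f * c) p') ∧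
            2 * (κ + δ + 1) + δ < d p p' := by
          by_contra! hcon
          refine hinf (((h.proper (2 * (κ + δ + 1) + δ)).image (p * ·)).subset ?_)
          intro p' hp'
          refine ⟨p⁻¹ * p', ?_, by simp⟩
          have := hcon p' hp'
          rwa [h.left_one] at this
        obtain ⟨y, hy, hpy⟩ := h.exists_close_of_isNearest hS'' hS' (y := f * c) (y' := f * c')
          (by simpa using hc) (by simpa using hc') hp hp' hfar
        refine ⟨⟨y⁻¹ * p, ?_⟩, f⁻¹ * y, hy, by simp⟩
        rw [h.comm, h.left_one] at hpy
        exact hpy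
      choose u hu using hclose
      have : Finite {g | d 1 g ≤ 2 * (κ + δ + 1) + δ + κ} := h.proper _
      have : Infinite {p | ∃ c ∈ C, IsNearest d S (f * c) p} := Set.Infinite.to_subtype hinf
      obtain ⟨v, hv⟩ := Finite.exists_infinite_fiber u
      obtain ⟨p₀, hp₀⟩ := hv.nonempty
      refine hv.not_finite ?_
      have hDf : Finite (D : Set G) := hDfin
      refine Finite.of_injective (β := (D : Set G))
        (fun p => ⟨(p : {p | ∃ c ∈ C, IsNearest d S (f * c) p}) * (p₀ : G)⁻¹, ?_⟩) ?_
      · obtain ⟨p, hp⟩ := p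
        obtain ⟨c, hc, hpc⟩ := hu p
        obtain ⟨c₀, hc₀, hpc₀⟩ := hu p₀
        have hpv : u p = v := hp
        have hpv₀ : u p₀ = v := hp₀
        have h1 : (p : G) ∈ H := by
          obtain ⟨_, _, h3⟩ := p.2
          exact hSH h3.1
        have h2 : (p₀ : G) ∈ H := by
          obtain ⟨_, _, h3⟩ := p₀.2
          exact hSH h3.1
        refine (hDmem _).2 ⟨mul_mem h1 (inv_mem h2), ?_⟩
        change f⁻¹ * ((p : G) * (p₀ : G)⁻¹) * f ∈ C
        rw [hpc, hpc₀, hpv, hpv₀]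
        convert mul_mem hc (inv_mem hc₀) using 1
        group
      · intro p q hpq
        have := congrArg Subtype.val hpq
        exact Subtype.ext (Subtype.ext (mul_right_cancel this))
    obtain ⟨R₁, hR₁⟩ := key S₁ hS₁ hH₁
    obtain ⟨R₂, hR₂⟩ := key S₂ hS₂ hH₂
    refine ⟨R₁ + R₂, fun c hc p q hp hq => ?_⟩
    have e1 := hR₁ c hc p hp
    have e2 := hR₂ c hc q hq
    have := h.tri p 1 q
    have := h.comm p 1
    linarith
  · obtain ⟨F, hF, hcov⟩ := (hC.conj f).exists_finite_cover (D := D) inf_le_right hDfin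
    have key : ∀ S : Set G, S.Nonempty →
        (∀ x ∈ H, f⁻¹ * x * f ∈ C → ∀ y ∈ S, x * y ∈ S) →
        ∃ R, ∀ c ∈ C, ∀ p, IsNearest d S (f * c) p → d (f * c) p ≤ R := by
      rintro S ⟨y, hy⟩ hinv
      obtain ⟨R, -, hR⟩ := h.finite_bddAbove (hF.image fun x => (x * f)⁻¹ * y)
      refine ⟨R, fun c hc p hp => ?_⟩
      obtain ⟨x, hx, a, ha, hxa⟩ := hcov (f * c * f⁻¹) ⟨c, hc, rfl⟩
      have hfc : f * c = x * (a * f) := by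
        rw [← mul_assoc, ← hxa, inv_mul_cancel_right]
      have h1 := hp.2 (x * y) (hinv x ((hDmem x).1 hx).1 ((hDmem x).1 hx).2 y hy)
      refine h1.trans ?_
      rw [hfc, h.left, h.left_one]
      exact hR _ ⟨a, ha, rfl⟩
    obtain ⟨R₁, hR₁⟩ := key S₁ hne₁ hinv₁
    obtain ⟨R₂, hR₂⟩ := key S₂ hne₂ hinv₂
    refine ⟨R₁ + R₂, fun c hc p q hp hq => ?_⟩
    have e1 := hR₁ c hc p hp
    have e2 := hR₂ c hc q hq
    have := h.tri p (f * c) q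
    have := h.comm p (f * c)
    linarith

/-- The projections of an edge to the orbits of its two ends are uniformly close. -/
theorem exists_vertexOrbit_compat (hCA : ∀ s, C ≤ A s) {d : G → G → ℝ} {δ : ℝ}
    (h : IsHypGroup d δ) (hC : IsVC C) {H : Subgroup G} {M : Set G} (hM : M.Finite) {K : ℝ}
    (hK : ∀ s, ∀ u ∈ edgeSet H M C, QCSet d K (vertexOrbit A H M s u)) :
    ∃ R, ∀ s, ∀ y ∈ edgeSet H M C, ∀ p q, IsNearest d (vertexOrbit A H M true y) y p →
      IsNearest d (vertexOrbit A H M s y) y q → d p q ≤ R := by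
  have hinv : ∀ f s, ∀ x ∈ H, f⁻¹ * x * f ∈ C → ∀ y ∈ vertexOrbit A H M s f,
      x * y ∈ vertexOrbit A H M s f := by
    intro f s x hx hxf y hy
    have h1 := (mem_vertexOrbit_left (A := A) (M := M) (s := s) (u := f) hx (x * y)).2
      (by simpa using hy)
    have h2 : x * f = f * (f⁻¹ * x * f) := by group
    rwa [h2, vertexOrbit_mul (hCA s hxf)] at h1
  have hfE : ∀ f ∈ M, f ∈ edgeSet H M C := fun f hf => by
    simpa using mem_edgeSet (C := C) (one_mem H) hf
  have key : ∀ (s : Bool) (f : G), ∃ R, f ∈ M → ∀ c ∈ C, ∀ p q,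
      IsNearest d (vertexOrbit A H M true f) (f * c) p →
      IsNearest d (vertexOrbit A H M s f) (f * c) q → d p q ≤ R := by
    intro s f
    by_cases hf : f ∈ M
    · obtain ⟨R, hR⟩ := projection_bounded h hC (H := H) (f := f) (hK true f (hfE f hf))
        (hK s f (hfE f hf)) (vertexOrbit_nonempty hCA (hfE f hf))
        (vertexOrbit_nonempty hCA (hfE f hf)) (fun x hx => hx.1) (fun x hx => hx.1)
        (hinv f true) (hinv f s)
      exact ⟨R, fun _ => hR⟩
    · exact ⟨0, fun h => absurd h hf⟩
  choose ρ hρ using key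
  obtain ⟨R, hR⟩ := ((Set.finite_univ.prod hM).image fun q : Bool × G => ρ q.1 q.2).bddAbove
  refine ⟨R, ?_⟩
  rintro s _ ⟨k, hk, f, hf, c, hc, rfl⟩ p q hp hq
  have hk' := inv_mem hk
  have htr : ∀ t p, IsNearest d (vertexOrbit A H M t (k * f * c)) (k * f * c) p →
      IsNearest d (vertexOrbit A H M t f) (f * c) (k⁻¹ * p) := by
    intro t p hp
    have h1 := hp.translate h k⁻¹ (T := vertexOrbit A H M t (k⁻¹ * (k * f * c)))
      (fun y => mem_vertexOrbit_left hk' y)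
    have h2 : k⁻¹ * (k * f * c) = f * c := by group
    rwa [h2, vertexOrbit_mul (hCA t hc)] at h1
  have h1 := hρ s f hf c hc _ _ (htr true p hp) (htr s q hq)
  rw [h.left] at h1
  exact h1.trans (hR ⟨(s, f), ⟨Set.mem_univ _, hf⟩, rfl⟩)

/-- Finitely generated subgroups are undistorted if the vertex groups have property (Q). -/
theorem wordLength_le (T : BassSerre A C) (hCA : ∀ s, C ≤ A s)
    (hgen : A true ⊔ A false = ⊤) {d : G → G → ℝ} {δ : ℝ} (h : IsHypGroup d δ) {X : Set G}
    (hX : IsSymmGen X) (hdX : ∀ g, d 1 g = wordLength X g) (hC : IsVC C)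
    (hQ : ∀ s, HasPropertyQ (A s)) {H : Subgroup G} (hH : H.FG) {Y : Set H} (hY : IsSymmGen Y) :
    ∃ c : ℝ, 0 < c ∧ ∀ p : H, (wordLength Y p : ℝ) ≤ c * wordLength X (p : G) + c := by
  obtain ⟨M, hM, h1M, hgate⟩ := T.exists_edgeSet_gate_closed hCA hH
  obtain ⟨K, hK⟩ := T.exists_qcSet_vertexOrbit hCA hgen h hX hdX hC hQ hH hM
  obtain ⟨R, hR⟩ := exists_vertexOrbit_compat hCA h hC hM hK
  have hHE : ∀ x ∈ H, x ∈ edgeSet H M C := fun x hx => by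
    simpa using mem_edgeSet (C := C) hx h1M
  obtain ⟨b, hb1, hb2, hb3, hb4⟩ := T.exists_extension hCA (E := edgeSet H M C)
    (fun c hc => by simpa using edgeSet_mul_mem (hHE 1 (one_mem H)) hc)
    (fun g hg c hc => edgeSet_mul_mem hg hc) hgate (vertexOrbit A H M true) (vertexOrbit A H M)
    (fun s g a ha => vertexOrbit_mul ha)
  have hb : ∀ g, (b g).Nonempty ∧ QCSet d K (b g) ∧ b g ⊆ H :=
    hb4 (fun S => S.Nonempty ∧ QCSet d K S ∧ S ⊆ H)
      (fun u hu => ⟨vertexOrbit_nonempty hCA hu, hK true u hu, fun x hx => hx.1⟩)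
      (fun u hu s => ⟨vertexOrbit_nonempty hCA hu, hK s u hu, fun x hx => hx.1⟩)
  choose r hr using fun g => h.exists_isNearest (hb g).1 g
  obtain ⟨o, ho⟩ := vertexOrbit_nonempty (A := A) (s := true) hCA (hHE 1 (one_mem H))
  refine h.wordLength_le_of_retraction hX hgen r (fun g => (hb g).2.2 (hr g).1)
    (K := d 1 o) ?_ ?_ hY
  · intro x hx
    have h1 := hr x
    rw [hb1 x (hHE x hx)] at h1
    have h2 := h1.2 (x * o) (by
      have := (mem_vertexOrbit_left (A := A) (M := M) (s := true) (u := 1) hx (x * o)).2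
        (by simpa using ho)
      simpa using this)
    rwa [h.right, h.comm] at h2
  · intro s x hx
    set κ := 4 * (K + δ + 1) + 2 * δ with hκ
    refine ⟨d 1 x + κ + 2 * (max R κ), fun g => ?_⟩
    have hgx := h.right g x
    have hK0 := h.qc_const_nonneg (hb g).2.1 (hr g).1
    have hδ := h.delta_nonneg
    have hmax : κ ≤ max R κ := le_max_right _ _
    by_cases hE : T.gate s g ∈ edgeSet H M C
    · have hS : vertexOrbit A H M s g = vertexOrbit A H M s (T.gate s g) := by
        have := vertexOrbit_mul (H := H) (M := M) (u := g) (T.gate_mem s g)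
        rw [mul_inv_cancel_left] at this
        exact this.symm
      have hSq : QCSet d K (vertexOrbit A H M s g) := hS ▸ hK s _ hE
      have hSne : (vertexOrbit A H M s g).Nonempty := hS ▸ vertexOrbit_nonempty hCA hE
      have key : ∀ y q, T.gate s y = T.gate s g →
          vertexOrbit A H M s y = vertexOrbit A H M s g →
          IsNearest d (vertexOrbit A H M s g) y q → d (r y) q ≤ max R κ := by
        intro y q hy hyS hq
        by_cases hyE : y ∈ edgeSet H M C
        · have h1 := hr y
          rw [hb1 y hyE] at h1
          rw [← hyS] at hq
          exact (hR s y hyE _ _ h1 hq).trans (le_max_left _ _)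
        · have h1 := hr y
          rw [hb3 s y (by rwa [hy]) hyE, hyS] at h1
          have := h.dist_le_of_isNearest hSq h1 hq
          rw [h.self, zero_add] at this
          exact this.trans (le_max_right _ _)
      obtain ⟨q, hq⟩ := h.exists_isNearest hSne g
      obtain ⟨q', hq'⟩ := h.exists_isNearest hSne (g * x)
      have e1 := key g q rfl rfl hq
      have e2 := key (g * x) q' (T.gate_mul s g x hx) (vertexOrbit_mul hx) hq'
      have e3 := h.dist_le_of_isNearest hSq hq hq'
      have e4 := h.tri (r g) q (r (g * x))
      have e5 := h.tri q q' (r (g * x))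
      have e6 := h.comm q' (r (g * x))
      linarith
    · have h6 := hr (g * x)
      rw [hb2 s g hE x hx] at h6
      have := h.dist_le_of_isNearest (hb g).2.1 (hr g) h6
      linarith

end BassSerre

theorem Subgroup.FG.exists_isSymmGen {G : Type u} [Group G] {H : Subgroup G} (hH : H.FG) :
    ∃ Y : Set H, IsSymmGen Y := by
  obtain ⟨S, hS, hfin⟩ := Subgroup.fg_iff _ |>.1 (Group.fg_def.1 ((Group.fg_iff_subgroup_fg H).2 hH))
  refine ⟨S ∪ S⁻¹, hfin.union hfin.inv, ?_, ?_⟩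
  · rintro x (hx | hx)
    · exact Or.inr (Set.inv_mem_inv.2 hx)
    · exact Or.inl hx
  · rw [eq_top_iff, ← hS]
    exact Subgroup.closure_mono Set.subset_union_left

end Amalgam

/-- **Theorem A.** If `G = A₁ ∗_C A₋₁` is word hyperbolic, `C` is virtually cyclic and
both factors have property (Q), then `G` has property (Q). -/
theorem amalgam_hasPropertyQ {G : Type u} [Group G] (A₁ A₂ C : Subgroup G)
    (hG : IsWordHyperbolic G)
    (amal : IsAmalgamatedFreeProduct A₁ A₂ C)
    (hC : IsVirtuallyCyclic ↥C)
    (hyp₁ : IsWordHyperbolic ↥A₁) (hyp₂ : IsWordHyperbolic ↥A₂)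
    (hQ₁ : HasPropertyQ ↥A₁) (hQ₂ : HasPropertyQ ↥A₂) :
    HasPropertyQ G := by
  intro H hH
  obtain ⟨X, hX, δ, hδ, hyp⟩ := hG
  obtain ⟨T⟩ := amal.nonempty_bassSerre
  obtain ⟨Y, hY⟩ := hH.exists_isSymmGen
  refine ⟨Y, hY, X, hX, ?_⟩
  refine T.wordLength_le ?_ amal.sup_eq_top (hX.isHypGroup hδ hyp) hX ?_ hC.isVC ?_ hH hY
  · rintro (_ | _)
    exacts [amal.le_right, amal.le_left]
  · intro g
    simp [wordDist]
  · rintro (_ | _)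
    exacts [hQ₂, hQ₁]
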